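/- Well-typed CG programs translate to noninterfering FG programs: Suppose ℓi ⋢ ℓ, x : Labeled ℓi τ ⊢ e_s : CG ℓ1 ℓ (bool) is derivable in CG, and x : Labeled ℓi τ ⊢ e_s : CG ℓ1 ℓ (bool) ⇝ e_t. Then for all closed FG values v1, v2 of type ⟦Labeled ℓi τ⟧ = (⟦τ⟧ + unit)^{ℓi}, if both (e_t[v1/x]) () and (e_t[v2/x]) (), evaluated under FG's big-step semantics from the empty heap, terminate, then they produce the same value. -/

import Mathlib

/-!
The argument has two halves: the translation produces well-typed FG code, and well-typed FG code is
noninterfering.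

*Typing.* Every term produced by `CG2FG` from a CG term of type `τ` is an FG term of type `toFG τ`
(`CG2FG.typed`), at any program counter, since all effects sit inside thunks.

*Noninterference of FG.* Fix an observer level `a`. Low equivalence `LowEq` of two terms at a type
is the congruence generated by the FG typing rules together with two extra clauses: any two
well-typed values are related at a type whose label is not below `a`, and two locations are related
when a partial bijection `β` between the two heaps relates them. Low equivalence of heaps, `HLow`,
says that both heaps are well typed and that `β`-related cells hold low-equivalent values. Since the
relation is a congruence, it is closed under substitution by construction (`LowEq.subst`), so no
step-indexed model of higher-order state is needed.

The theorem `preservation` combines type preservation with confinement: an evaluation at a program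
counter not below `a` leaves the observable cells of the heap unchanged. The theorem `fundamental`
states that low-equivalent terms run from low-equivalent heaps give low-equivalent values and heaps,
in an extended world. Its proof is by induction on the height of the first evaluation. When the value
being eliminated is observable, both runs proceed in lockstep. When an applied function or a branching
condition is secret, the two runs may take different paths, but both happen at a secret program
counter, so `HLow.secret_runs` relates the outcomes by confinement. Reading through a secret
reference yields a secret value, and writing through one changes only secret cells
(`HLow.confined`).

The two inputs are low equivalent at `l` because `li` does not flow to `l`, and at the result type
`(bool + unit)^l` low equivalence is equality (`VLow.eq_of_ground`).
-/

/-! ## Shared expression syntax for the FG and CG calculi (de Bruijn indices) -/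

inductive Exp : Type where
  | var (n : ℕ)
  | lam (e : Exp)
  | app (e1 e2 : Exp)
  | pair (e1 e2 : Exp)
  | fst (e : Exp)
  | snd (e : Exp)
  | inl (e : Exp)
  | inr (e : Exp)
  | case (e e1 e2 : Exp)      -- the two branches each bind one variable
  | tt
  | ff
  | unit
  | loc (n : ℕ)
  | new (e : Exp)
  | deref (e : Exp)
  | assign (e1 e2 : Exp)
  | label (e : Exp)
  | unlabel (e : Exp)
  | toLabeled (e : Exp)
  | ret (e : Exp)
  | bind (e1 e2 : Exp)        -- e2 binds one variable
deriving DecidableEq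

namespace Exp

/-- Shift free de Bruijn indices `≥ c` up by one. -/
def shift (c : ℕ) : Exp → Exp
  | var n => if n < c then var n else var (n + 1)
  | lam e => lam (e.shift (c + 1))
  | app e1 e2 => app (e1.shift c) (e2.shift c)
  | pair e1 e2 => pair (e1.shift c) (e2.shift c)
  | fst e => fst (e.shift c)
  | snd e => snd (e.shift c)
  | inl e => inl (e.shift c)
  | inr e => inr (e.shift c)
  | case e e1 e2 => case (e.shift c) (e1.shift (c + 1)) (e2.shift (c + 1))
  | tt => tt
  | ff => ff
  | unit => unit
  | loc n => loc n
  | new e => new (e.shift c)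
  | deref e => deref (e.shift c)
  | assign e1 e2 => assign (e1.shift c) (e2.shift c)
  | label e => label (e.shift c)
  | unlabel e => unlabel (e.shift c)
  | toLabeled e => toLabeled (e.shift c)
  | ret e => ret (e.shift c)
  | bind e1 e2 => bind (e1.shift c) (e2.shift (c + 1))

/-- Substitution `e[v/k]` of `v` for de Bruijn index `k` in `e`. -/
def subst : Exp → Exp → ℕ → Exp
  | var n, v, k => if n = k then v else if k < n then var (n - 1) else var n
  | lam e, v, k => lam (e.subst (v.shift 0) (k + 1))
  | app e1 e2, v, k => app (e1.subst v k) (e2.subst v k)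
  | pair e1 e2, v, k => pair (e1.subst v k) (e2.subst v k)
  | fst e, v, k => fst (e.subst v k)
  | snd e, v, k => snd (e.subst v k)
  | inl e, v, k => inl (e.subst v k)
  | inr e, v, k => inr (e.subst v k)
  | case e e1 e2, v, k =>
      case (e.subst v k) (e1.subst (v.shift 0) (k + 1)) (e2.subst (v.shift 0) (k + 1))
  | tt, _, _ => tt
  | ff, _, _ => ff
  | unit, _, _ => unit
  | loc n, _, _ => loc n
  | new e, v, k => new (e.subst v k)
  | deref e, v, k => deref (e.subst v k)
  | assign e1 e2, v, k => assign (e1.subst v k) (e2.subst v k)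
  | label e, v, k => label (e.subst v k)
  | unlabel e, v, k => unlabel (e.subst v k)
  | toLabeled e, v, k => toLabeled (e.subst v k)
  | ret e, v, k => ret (e.subst v k)
  | bind e1 e2, v, k => bind (e1.subst v k) (e2.subst (v.shift 0) (k + 1))

end Exp

/-- Heaps: locations are list indices; allocation appends. -/
abbrev Heap := List Exp

/-! ## Values -/

/-- Values of the FG language. -/
inductive FGVal : Exp → Prop where
  | lam : FGVal (.lam e)
  | pair : FGVal v1 → FGVal v2 → FGVal (.pair v1 v2)
  | inl : FGVal v → FGVal (.inl v)
  | inr : FGVal v → FGVal (.inr v)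
  | tt : FGVal .tt
  | ff : FGVal .ff
  | unit : FGVal .unit
  | loc : FGVal (.loc n)

/-- Values of the CG language (monadic expressions are suspended computations,
hence values; labeled values are values). -/
inductive CGVal : Exp → Prop where
  | lam : CGVal (.lam e)
  | pair : CGVal v1 → CGVal v2 → CGVal (.pair v1 v2)
  | inl : CGVal v → CGVal (.inl v)
  | inr : CGVal v → CGVal (.inr v)
  | tt : CGVal .tt
  | ff : CGVal .ff
  | unit : CGVal .unit
  | loc : CGVal (.loc n)
  | label : CGVal v → CGVal (.label v)
  | ret : CGVal (.ret e)
  | bind : CGVal (.bind e1 e2)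
  | unlabel : CGVal (.unlabel e)
  | toLabeled : CGVal (.toLabeled e)
  | new : CGVal (.new e)
  | deref : CGVal (.deref e)
  | assign : CGVal (.assign e1 e2)

/-! ## FG: deterministic big-step call-by-value evaluation over heaps -/

inductive FGEval : Heap → Exp → Heap → Exp → Prop where
  | lam : FGEval h (.lam e) h (.lam e)
  | tt : FGEval h .tt h .tt
  | ff : FGEval h .ff h .ff
  | unit : FGEval h .unit h .unit
  | loc : FGEval h (.loc n) h (.loc n)
  | app : FGEval h e1 h1 (.lam e) → FGEval h1 e2 h2 v2 →
      FGEval h2 (e.subst v2 0) h3 v → FGEval h (.app e1 e2) h3 v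
  | pair : FGEval h e1 h1 v1 → FGEval h1 e2 h2 v2 →
      FGEval h (.pair e1 e2) h2 (.pair v1 v2)
  | fst : FGEval h e h1 (.pair v1 v2) → FGEval h (.fst e) h1 v1
  | snd : FGEval h e h1 (.pair v1 v2) → FGEval h (.snd e) h1 v2
  | inl : FGEval h e h1 v → FGEval h (.inl e) h1 (.inl v)
  | inr : FGEval h e h1 v → FGEval h (.inr e) h1 (.inr v)
  | caseL : FGEval h e h1 (.inl v) → FGEval h1 (e1.subst v 0) h2 w →
      FGEval h (.case e e1 e2) h2 w
  | caseR : FGEval h e h1 (.inr v) → FGEval h1 (e2.subst v 0) h2 w →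
      FGEval h (.case e e1 e2) h2 w
  | new : FGEval h e h1 v → FGEval h (.new e) (h1 ++ [v]) (.loc h1.length)
  | deref : FGEval h e h1 (.loc n) → h1[n]? = some v → FGEval h (.deref e) h1 v
  | assign : FGEval h e1 h1 (.loc n) → FGEval h1 e2 h2 v →
      FGEval h (.assign e1 e2) (h2.set n v) .unit

/-! ## CG: pure big-step evaluation (no heap) and forcing semantics over heaps -/

/-- Pure (heap-free) big-step evaluation for CG.  Monadic expressions are
suspended computations and evaluate to themselves. -/
inductive CGPure : Exp → Exp → Prop where
  | lam : CGPure (.lam e) (.lam e)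
  | tt : CGPure .tt .tt
  | ff : CGPure .ff .ff
  | unit : CGPure .unit .unit
  | loc : CGPure (.loc n) (.loc n)
  | app : CGPure e1 (.lam e) → CGPure e2 v2 → CGPure (e.subst v2 0) v →
      CGPure (.app e1 e2) v
  | pair : CGPure e1 v1 → CGPure e2 v2 → CGPure (.pair e1 e2) (.pair v1 v2)
  | fst : CGPure e (.pair v1 v2) → CGPure (.fst e) v1
  | snd : CGPure e (.pair v1 v2) → CGPure (.snd e) v2
  | inl : CGPure e v → CGPure (.inl e) (.inl v)
  | inr : CGPure e v → CGPure (.inr e) (.inr v)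
  | caseL : CGPure e (.inl v) → CGPure (e1.subst v 0) w → CGPure (.case e e1 e2) w
  | caseR : CGPure e (.inr v) → CGPure (e2.subst v 0) w → CGPure (.case e e1 e2) w
  | label : CGPure e v → CGPure (.label e) (.label v)
  | ret : CGPure (.ret e) (.ret e)
  | bind : CGPure (.bind e1 e2) (.bind e1 e2)
  | unlabel : CGPure (.unlabel e) (.unlabel e)
  | toLabeled : CGPure (.toLabeled e) (.toLabeled e)
  | new : CGPure (.new e) (.new e)
  | deref : CGPure (.deref e) (.deref e)
  | assign : CGPure (.assign e1 e2) (.assign e1 e2)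

/-- Forcing semantics for CG's monadic computations: actually performs heap
reads, writes and allocations. -/
inductive CGForce : Heap → Exp → Heap → Exp → Prop where
  | ret : CGPure e (.ret e0) → CGPure e0 v → CGForce h e h v
  | bind : CGPure e (.bind e1 e2) → CGForce h e1 h1 v1 →
      CGForce h1 (e2.subst v1 0) h2 v → CGForce h e h2 v
  | unlabel : CGPure e (.unlabel e0) → CGPure e0 (.label v) → CGForce h e h v
  | toLabeled : CGPure e (.toLabeled e0) → CGForce h e0 h1 v →
      CGForce h e h1 (.label v)
  | new : CGPure e (.new e0) → CGPure e0 v → CGForce h e (h ++ [v]) (.loc h.length)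
  | deref : CGPure e (.deref e0) → CGPure e0 (.loc n) → h[n]? = some v →
      CGForce h e h v
  | assign : CGPure e (.assign e1 e2) → CGPure e1 (.loc n) → CGPure e2 v →
      CGForce h e (h.set n v) .unit

/-! ## FG types (every type constructor carries its outer security label) -/

inductive FGTy (L : Type) : Type where
  | bool (l : L)
  | unit (l : L)
  | fn (t1 : FGTy L) (le : L) (t2 : FGTy L) (l : L)
  | prod (t1 t2 : FGTy L) (l : L)
  | sum (t1 t2 : FGTy L) (l : L)
  | ref (t : FGTy L) (l : L)

/-- The outer label of an FG type (`(A^ℓ).lab = ℓ`).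
`τ.lab ≥ ℓ` is the protection judgment `τ ↘ ℓ`. -/
def FGTy.lab {L : Type} : FGTy L → L
  | .bool l => l
  | .unit l => l
  | .fn _ _ _ l => l
  | .prod _ _ l => l
  | .sum _ _ l => l
  | .ref _ l => l

/-- FG subtyping: structural, covariant in security labels, contravariant in
the pc-label of function types, invariant in the content type of references. -/
inductive FGSub {L : Type} [Lattice L] [BoundedOrder L] : FGTy L → FGTy L → Prop where
  | bool : l ≤ l' → FGSub (.bool l) (.bool l')
  | unit : l ≤ l' → FGSub (.unit l) (.unit l')
  | fn : FGSub τ1' τ1 → le' ≤ le → FGSub τ2 τ2' → l ≤ l' →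
      FGSub (.fn τ1 le τ2 l) (.fn τ1' le' τ2' l')
  | prod : FGSub τ1 τ1' → FGSub τ2 τ2' → l ≤ l' →
      FGSub (.prod τ1 τ2 l) (.prod τ1' τ2' l')
  | sum : FGSub τ1 τ1' → FGSub τ2 τ2' → l ≤ l' →
      FGSub (.sum τ1 τ2 l) (.sum τ1' τ2' l')
  | ref : l ≤ l' → FGSub (.ref τ l) (.ref τ l')

/-- The FG typing judgment `Γ ⊢_pc e : τ`. -/
inductive FGTyped {L : Type} [Lattice L] [BoundedOrder L] :
    List (FGTy L) → L → Exp → FGTy L → Prop where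
  | var : Γ[n]? = some τ → FGTyped Γ pc (.var n) τ
  | tt : FGTyped Γ pc .tt (.bool ⊥)
  | ff : FGTyped Γ pc .ff (.bool ⊥)
  | unit : FGTyped Γ pc .unit (.unit ⊥)
  | lam : FGTyped (τ1 :: Γ) le e τ2 → FGTyped Γ pc (.lam e) (.fn τ1 le τ2 ⊥)
  | app : FGTyped Γ pc e1 (.fn τ1 le τ2 l) → FGTyped Γ pc e2 τ1 →
      l ⊔ pc ≤ le → l ≤ τ2.lab → FGTyped Γ pc (.app e1 e2) τ2
  | pair : FGTyped Γ pc e1 τ1 → FGTyped Γ pc e2 τ2 →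
      FGTyped Γ pc (.pair e1 e2) (.prod τ1 τ2 ⊥)
  | fst : FGTyped Γ pc e (.prod τ1 τ2 l) → l ≤ τ1.lab → FGTyped Γ pc (.fst e) τ1
  | snd : FGTyped Γ pc e (.prod τ1 τ2 l) → l ≤ τ2.lab → FGTyped Γ pc (.snd e) τ2
  | inl : FGTyped Γ pc e τ1 → FGTyped Γ pc (.inl e) (.sum τ1 τ2 ⊥)
  | inr : FGTyped Γ pc e τ2 → FGTyped Γ pc (.inr e) (.sum τ1 τ2 ⊥)
  | case : FGTyped Γ pc e (.sum τ1 τ2 l) → FGTyped (τ1 :: Γ) (pc ⊔ l) e1 τ →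
      FGTyped (τ2 :: Γ) (pc ⊔ l) e2 τ → l ≤ τ.lab →
      FGTyped Γ pc (.case e e1 e2) τ
  | new : FGTyped Γ pc e τ → pc ≤ τ.lab → FGTyped Γ pc (.new e) (.ref τ ⊥)
  | deref : FGTyped Γ pc e (.ref τ l) → FGSub τ τ' → l ≤ τ'.lab →
      FGTyped Γ pc (.deref e) τ'
  | assign : FGTyped Γ pc e1 (.ref τ l) → FGTyped Γ pc e2 τ →
      pc ⊔ l ≤ τ.lab → FGTyped Γ pc (.assign e1 e2) (.unit ⊥)
  | sub : FGTyped Γ pc' e τ' → FGSub τ' τ → pc ≤ pc' → FGTyped Γ pc e τ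

/-! ## CG types -/

inductive CGTy (L : Type) : Type where
  | bool
  | unit
  | fn (t1 t2 : CGTy L)
  | prod (t1 t2 : CGTy L)
  | sum (t1 t2 : CGTy L)
  | ref (l : L) (t : CGTy L)
  | labeled (l : L) (t : CGTy L)
  | monad (l1 l2 : L) (t : CGTy L)   -- CG ℓ1 ℓ2 τ : pc-label ℓ1, taint label ℓ2

/-- CG subtyping: `Labeled ℓ τ` covariant in `ℓ` and `τ`; `CG ℓ1 ℓ2 τ`
contravariant in `ℓ1`, covariant in `ℓ2` and `τ`. -/
inductive CGSub {L : Type} [Lattice L] [BoundedOrder L] : CGTy L → CGTy L → Prop where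
  | bool : CGSub .bool .bool
  | unit : CGSub .unit .unit
  | fn : CGSub τ1' τ1 → CGSub τ2 τ2' → CGSub (.fn τ1 τ2) (.fn τ1' τ2')
  | prod : CGSub τ1 τ1' → CGSub τ2 τ2' → CGSub (.prod τ1 τ2) (.prod τ1' τ2')
  | sum : CGSub τ1 τ1' → CGSub τ2 τ2' → CGSub (.sum τ1 τ2) (.sum τ1' τ2')
  | ref : CGSub (.ref l τ) (.ref l τ)
  | labeled : CGSub τ τ' → l ≤ l' → CGSub (.labeled l τ) (.labeled l' τ')
  | monad : l1' ≤ l1 → l2 ≤ l2' → CGSub τ τ' →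
      CGSub (.monad l1 l2 τ) (.monad l1' l2' τ')

/-- The CG typing judgment `Γ ⊢ e : τ`. -/
inductive CGTyped {L : Type} [Lattice L] [BoundedOrder L] :
    List (CGTy L) → Exp → CGTy L → Prop where
  | var : Γ[n]? = some τ → CGTyped Γ (.var n) τ
  | tt : CGTyped Γ .tt .bool
  | ff : CGTyped Γ .ff .bool
  | unit : CGTyped Γ .unit .unit
  | lam : CGTyped (τ1 :: Γ) e τ2 → CGTyped Γ (.lam e) (.fn τ1 τ2)
  | app : CGTyped Γ e1 (.fn τ1 τ2) → CGTyped Γ e2 τ1 → CGTyped Γ (.app e1 e2) τ2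
  | pair : CGTyped Γ e1 τ1 → CGTyped Γ e2 τ2 → CGTyped Γ (.pair e1 e2) (.prod τ1 τ2)
  | fst : CGTyped Γ e (.prod τ1 τ2) → CGTyped Γ (.fst e) τ1
  | snd : CGTyped Γ e (.prod τ1 τ2) → CGTyped Γ (.snd e) τ2
  | inl : CGTyped Γ e τ1 → CGTyped Γ (.inl e) (.sum τ1 τ2)
  | inr : CGTyped Γ e τ2 → CGTyped Γ (.inr e) (.sum τ1 τ2)
  | case : CGTyped Γ e (.sum τ1 τ2) → CGTyped (τ1 :: Γ) e1 τ →
      CGTyped (τ2 :: Γ) e2 τ → CGTyped Γ (.case e e1 e2) τ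
  | ret : CGTyped Γ e τ → CGTyped Γ (.ret e) (.monad ⊤ ⊥ τ)
  | bind : CGTyped Γ e1 (.monad l1 l2 τ) → CGTyped (τ :: Γ) e2 (.monad l3 l4 τ') →
      l ≤ l1 → l ≤ l3 → l2 ≤ l3 → l2 ≤ l4 →
      CGTyped Γ (.bind e1 e2) (.monad l l4 τ')
  | label : CGTyped Γ e τ → CGTyped Γ (.label e) (.labeled l τ)
  | unlabel : CGTyped Γ e (.labeled l τ) → CGTyped Γ (.unlabel e) (.monad ⊤ l τ)
  | new : CGTyped Γ e (.labeled l τ) → CGTyped Γ (.new e) (.monad l ⊥ (.ref l τ))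
  | deref : CGTyped Γ e (.ref l' τ) → CGTyped Γ (.deref e) (.monad ⊤ ⊥ (.labeled l' τ))
  | assign : CGTyped Γ e1 (.ref l τ) → CGTyped Γ e2 (.labeled l τ) →
      CGTyped Γ (.assign e1 e2) (.monad l ⊥ .unit)
  | toLabeled : CGTyped Γ e (.monad l l' τ) →
      CGTyped Γ (.toLabeled e) (.monad l ⊥ (.labeled l' τ))
  | sub : CGTyped Γ e τ' → CGSub τ' τ → CGTyped Γ e τ

/-! ## The CG-to-FG type translation ⟦·⟧ -/

def toFG {L : Type} [Lattice L] [BoundedOrder L] : CGTy L → FGTy L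
  | .bool => .bool ⊥
  | .unit => .unit ⊥
  | .fn τ1 τ2 => .fn (toFG τ1) ⊤ (toFG τ2) ⊥
  | .prod τ1 τ2 => .prod (toFG τ1) (toFG τ2) ⊥
  | .sum τ1 τ2 => .sum (toFG τ1) (toFG τ2) ⊥
  | .ref l τ => .ref (.sum (toFG τ) (.unit ⊥) l) ⊥
  | .labeled l τ => .sum (toFG τ) (.unit ⊥) l
  | .monad l1 l2 τ => .fn (.unit ⊥) l1 (.sum (toFG τ) (.unit ⊥) l2) ⊥

/-! ## The FG-to-CG type translation: ⟦A^ℓ⟧ = Labeled ℓ ⟨A⟩ -/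

/-- `⟨A⟩`: translation of the unlabeled part of an FG type. -/
def trA {L : Type} [Lattice L] [BoundedOrder L] : FGTy L → CGTy L
  | .bool _ => .bool
  | .unit _ => .unit
  | .fn τ1 le τ2 _ =>
      .fn (.labeled τ1.lab (trA τ1)) (.monad le ⊥ (.labeled τ2.lab (trA τ2)))
  | .prod τ1 τ2 _ => .prod (.labeled τ1.lab (trA τ1)) (.labeled τ2.lab (trA τ2))
  | .sum τ1 τ2 _ => .sum (.labeled τ1.lab (trA τ1)) (.labeled τ2.lab (trA τ2))
  | .ref τ _ => .ref τ.lab (trA τ)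

/-- `⟦A^ℓ⟧ = Labeled ℓ ⟨A⟩`. -/
def toCG {L : Type} [Lattice L] [BoundedOrder L] (τ : FGTy L) : CGTy L :=
  .labeled τ.lab (trA τ)

/-! ## CG-to-FG expression translation `Γ ⊢ e : τ ⇝ e_F` -/

inductive CG2FG {L : Type} [Lattice L] [BoundedOrder L] :
    List (CGTy L) → Exp → CGTy L → Exp → Prop where
  | var : Γ[n]? = some τ → CG2FG Γ (.var n) τ (.var n)
  | tt : CG2FG Γ .tt .bool .tt
  | ff : CG2FG Γ .ff .bool .ff
  | unit : CG2FG Γ .unit .unit .unit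
  | lam : CG2FG (τ1 :: Γ) e τ2 eF → CG2FG Γ (.lam e) (.fn τ1 τ2) (.lam eF)
  | app : CG2FG Γ e1 (.fn τ1 τ2) eF1 → CG2FG Γ e2 τ1 eF2 →
      CG2FG Γ (.app e1 e2) τ2 (.app eF1 eF2)
  | pair : CG2FG Γ e1 τ1 eF1 → CG2FG Γ e2 τ2 eF2 →
      CG2FG Γ (.pair e1 e2) (.prod τ1 τ2) (.pair eF1 eF2)
  | fst : CG2FG Γ e (.prod τ1 τ2) eF → CG2FG Γ (.fst e) τ1 (.fst eF)
  | snd : CG2FG Γ e (.prod τ1 τ2) eF → CG2FG Γ (.snd e) τ2 (.snd eF)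
  | inl : CG2FG Γ e τ1 eF → CG2FG Γ (.inl e) (.sum τ1 τ2) (.inl eF)
  | inr : CG2FG Γ e τ2 eF → CG2FG Γ (.inr e) (.sum τ1 τ2) (.inr eF)
  | case : CG2FG Γ e (.sum τ1 τ2) eF → CG2FG (τ1 :: Γ) e1 τ eF1 →
      CG2FG (τ2 :: Γ) e2 τ eF2 → CG2FG Γ (.case e e1 e2) τ (.case eF eF1 eF2)
  | label : CG2FG Γ e τ eF → CG2FG Γ (.label e) (.labeled l τ) (.inl eF)
  | unlabel : CG2FG Γ e (.labeled l τ) eF →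
      CG2FG Γ (.unlabel e) (.monad ⊤ l τ) (.lam (eF.shift 0))
  | toLabeled : CG2FG Γ e (.monad l1 l2 τ) eF →
      CG2FG Γ (.toLabeled e) (.monad l1 ⊥ (.labeled l2 τ))
        (.lam (.inl (.app (eF.shift 0) .unit)))
  | ret : CG2FG Γ e τ eF → CG2FG Γ (.ret e) (.monad ⊤ ⊥ τ) (.lam (.inl (eF.shift 0)))
  | bind : CG2FG Γ e1 (.monad l1 l2 τ) eF1 →
      CG2FG (τ :: Γ) e2 (.monad l3 l4 τ') eF2 →
      l ≤ l1 → l ≤ l3 → l2 ≤ l3 → l2 ≤ l4 →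
      CG2FG Γ (.bind e1 e2) (.monad l l4 τ')
        (.lam (.case (.app (eF1.shift 0) .unit) (.app (eF2.shift 1) .unit)
          (.inr .unit)))
  | new : CG2FG Γ e (.labeled l τ) eF →
      CG2FG Γ (.new e) (.monad l ⊥ (.ref l τ)) (.lam (.inl (.new (eF.shift 0))))
  | deref : CG2FG Γ e (.ref l' τ) eF →
      CG2FG Γ (.deref e) (.monad ⊤ ⊥ (.labeled l' τ))
        (.lam (.inl (.deref (eF.shift 0))))
  | assign : CG2FG Γ e1 (.ref l τ) eF1 → CG2FG Γ e2 (.labeled l τ) eF2 →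
      CG2FG Γ (.assign e1 e2) (.monad l ⊥ .unit)
        (.lam (.inl (.assign (eF1.shift 0) (eF2.shift 0))))
  | sub : CG2FG Γ e τ' eF → CGSub τ' τ → CG2FG Γ e τ eF

/-! ## FG-to-CG expression translation `Γ ⊢_pc e : τ ⇝ e_c` -/

/-- `coerce_taint ≜ λx. toLabeled(bind(x, y. unlabel y))`. -/
def coerceTaint : Exp := .lam (.toLabeled (.bind (.var 0) (.unlabel (.var 0))))

inductive FG2CG {L : Type} [Lattice L] [BoundedOrder L] :
    List (FGTy L) → L → Exp → FGTy L → Exp → Prop where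
  | var : Γ[n]? = some τ → FG2CG Γ pc (.var n) τ (.ret (.var n))
  | tt : FG2CG Γ pc .tt (.bool ⊥) (.ret (.label .tt))
  | ff : FG2CG Γ pc .ff (.bool ⊥) (.ret (.label .ff))
  | unit : FG2CG Γ pc .unit (.unit ⊥) (.ret (.label .unit))
  | lam : FG2CG (τ1 :: Γ) le e τ2 ec →
      FG2CG Γ pc (.lam e) (.fn τ1 le τ2 ⊥) (.ret (.label (.lam ec)))
  | app : FG2CG Γ pc e1 (.fn τ1 le τ2 l) ec1 → FG2CG Γ pc e2 τ1 ec2 →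
      l ⊔ pc ≤ le → l ≤ τ2.lab →
      FG2CG Γ pc (.app e1 e2) τ2
        (.app coerceTaint
          (.bind ec1 (.bind (ec2.shift 0)
            (.bind (.unlabel (.var 1)) (.app (.var 0) (.var 1))))))
  | pair : FG2CG Γ pc e1 τ1 ec1 → FG2CG Γ pc e2 τ2 ec2 →
      FG2CG Γ pc (.pair e1 e2) (.prod τ1 τ2 ⊥)
        (.bind ec1 (.bind (ec2.shift 0) (.ret (.label (.pair (.var 1) (.var 0))))))
  | fst : FG2CG Γ pc e (.prod τ1 τ2 l) ec → l ≤ τ1.lab →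
      FG2CG Γ pc (.fst e) τ1
        (.app coerceTaint
          (.bind ec (.bind (.unlabel (.var 0)) (.ret (.fst (.var 0))))))
  | snd : FG2CG Γ pc e (.prod τ1 τ2 l) ec → l ≤ τ2.lab →
      FG2CG Γ pc (.snd e) τ2
        (.app coerceTaint
          (.bind ec (.bind (.unlabel (.var 0)) (.ret (.snd (.var 0))))))
  | inl : FG2CG Γ pc e τ1 ec →
      FG2CG Γ pc (.inl e) (.sum τ1 τ2 ⊥) (.bind ec (.ret (.label (.inl (.var 0)))))
  | inr : FG2CG Γ pc e τ2 ec →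
      FG2CG Γ pc (.inr e) (.sum τ1 τ2 ⊥) (.bind ec (.ret (.label (.inr (.var 0)))))
  | case : FG2CG Γ pc e (.sum τ1 τ2 l) ec →
      FG2CG (τ1 :: Γ) (pc ⊔ l) e1 τ ec1 → FG2CG (τ2 :: Γ) (pc ⊔ l) e2 τ ec2 →
      l ≤ τ.lab →
      FG2CG Γ pc (.case e e1 e2) τ
        (.app coerceTaint
          (.bind ec (.bind (.unlabel (.var 0))
            (.case (.var 0) ((ec1.shift 1).shift 1) ((ec2.shift 1).shift 1)))))
  | new : FG2CG Γ pc e τ ec → pc ≤ τ.lab →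
      FG2CG Γ pc (.new e) (.ref τ ⊥)
        (.bind ec (.bind (.new (.var 0)) (.ret (.label (.var 0)))))
  | deref : FG2CG Γ pc e (.ref τ l) ec → FGSub τ τ' → l ≤ τ'.lab →
      FG2CG Γ pc (.deref e) τ'
        (.app coerceTaint
          (.bind ec (.bind (.unlabel (.var 0)) (.deref (.var 0)))))
  | assign : FG2CG Γ pc e1 (.ref τ l) ec1 → FG2CG Γ pc e2 τ ec2 →
      pc ⊔ l ≤ τ.lab →
      FG2CG Γ pc (.assign e1 e2) (.unit ⊥)
        (.bind (.toLabeled (.bind ec1 (.bind (ec2.shift 0)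
          (.bind (.unlabel (.var 1)) (.assign (.var 0) (.var 1))))))
          (.ret (.label .unit)))
  | sub : FG2CG Γ pc' e τ' ec → FGSub τ' τ → pc ≤ pc' → FG2CG Γ pc e τ ec

/-! ### Subtyping -/

theorem FGSub.refl {L : Type} [Lattice L] [BoundedOrder L] : ∀ τ : FGTy L, FGSub τ τ
  | .bool _ => .bool le_rfl
  | .unit _ => .unit le_rfl
  | .fn t1 _ t2 _ => .fn (FGSub.refl t1) le_rfl (FGSub.refl t2) le_rfl
  | .prod t1 t2 _ => .prod (FGSub.refl t1) (FGSub.refl t2) le_rfl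
  | .sum t1 t2 _ => .sum (FGSub.refl t1) (FGSub.refl t2) le_rfl
  | .ref _ _ => .ref le_rfl

theorem FGSub.trans {L : Type} [Lattice L] [BoundedOrder L] {τ2 : FGTy L} :
    ∀ {τ1 τ3 : FGTy L}, FGSub τ1 τ2 → FGSub τ2 τ3 → FGSub τ1 τ3 := by
  induction τ2 with
  | bool l => intro _ _ h1 h2; cases h1; cases h2; exact .bool (le_trans ‹_› ‹_›)
  | unit l => intro _ _ h1 h2; cases h1; cases h2; exact .unit (le_trans ‹_› ‹_›)
  | fn t1 le t2 l ih1 ih2 =>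
    intro _ _ h1 h2
    cases h1 with
    | fn a1 b1 c1 d1 =>
      cases h2 with
      | fn a2 b2 c2 d2 => exact .fn (ih1 a2 a1) (b2.trans b1) (ih2 c1 c2) (d1.trans d2)
  | prod t1 t2 l ih1 ih2 =>
    intro _ _ h1 h2
    cases h1 with
    | prod a1 c1 d1 =>
      cases h2 with
      | prod a2 c2 d2 => exact .prod (ih1 a1 a2) (ih2 c1 c2) (d1.trans d2)
  | sum t1 t2 l ih1 ih2 =>
    intro _ _ h1 h2
    cases h1 with
    | sum a1 c1 d1 =>
      cases h2 with
      | sum a2 c2 d2 => exact .sum (ih1 a1 a2) (ih2 c1 c2) (d1.trans d2)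
  | ref t l ih => intro _ _ h1 h2; cases h1; cases h2; exact .ref (le_trans ‹_› ‹_›)

theorem FGSub.lab_le {L : Type} [Lattice L] [BoundedOrder L] {τ τ' : FGTy L}
    (h : FGSub τ τ') : τ.lab ≤ τ'.lab := by
  cases h <;> assumption

theorem CGSub.toFG_sub {L : Type} [Lattice L] [BoundedOrder L] {τ τ' : CGTy L}
    (h : CGSub τ τ') : FGSub (toFG τ) (toFG τ') := by
  induction h with
  | bool => exact .bool le_rfl
  | unit => exact .unit le_rfl
  | fn _ _ ih1 ih2 => exact .fn ih1 le_rfl ih2 le_rfl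
  | prod _ _ ih1 ih2 => exact .prod ih1 ih2 le_rfl
  | sum _ _ ih1 ih2 => exact .sum ih1 ih2 le_rfl
  | ref => exact FGSub.refl _
  | labeled _ h ih => exact .sum ih (.unit le_rfl) h
  | monad h1 h2 _ ih =>
    exact .fn (.unit le_rfl) h1 (.sum ih (.unit le_rfl) h2) le_rfl

/-! ### The translation preserves typing -/

theorem FGTyped.shift_mid {L : Type} [Lattice L] [BoundedOrder L] {Γ : List (FGTy L)} {pc : L}
    {e : Exp} {τ : FGTy L} (h : FGTyped Γ pc e τ) :
    ∀ (Γ1 Γ2 : List (FGTy L)) (σ : FGTy L), Γ = Γ1 ++ Γ2 →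
      FGTyped (Γ1 ++ σ :: Γ2) pc (e.shift Γ1.length) τ := by
  induction h with
  | @var Γ n τ pc hn =>
    rintro Γ1 Γ2 σ rfl
    simp only [Exp.shift]
    split
    · rename_i hlt
      refine .var ?_
      rw [List.getElem?_append_left hlt] at hn ⊢
      exact hn
    · rename_i hge
      refine .var ?_
      rw [List.getElem?_append_right (by omega)] at hn ⊢
      rw [Nat.sub_add_comm (by omega), List.getElem?_cons_succ]
      exact hn
  | tt => intros; exact .tt
  | ff => intros; exact .ff
  | unit => intros; exact .unit
  | lam _ ih => rintro Γ1 Γ2 σ rfl; exact .lam (ih (_ :: Γ1) Γ2 σ rfl)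
  | app _ _ h1 h2 ih1 ih2 =>
    intro Γ1 Γ2 σ e; exact .app (ih1 Γ1 Γ2 σ e) (ih2 Γ1 Γ2 σ e) h1 h2
  | pair _ _ ih1 ih2 => intro Γ1 Γ2 σ e; exact .pair (ih1 Γ1 Γ2 σ e) (ih2 Γ1 Γ2 σ e)
  | fst _ h ih => intro Γ1 Γ2 σ e; exact .fst (ih Γ1 Γ2 σ e) h
  | snd _ h ih => intro Γ1 Γ2 σ e; exact .snd (ih Γ1 Γ2 σ e) h
  | inl _ ih => intro Γ1 Γ2 σ e; exact .inl (ih Γ1 Γ2 σ e)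
  | inr _ ih => intro Γ1 Γ2 σ e; exact .inr (ih Γ1 Γ2 σ e)
  | case _ _ _ h ih ih1 ih2 =>
    rintro Γ1 Γ2 σ rfl
    exact .case (ih Γ1 Γ2 σ rfl) (ih1 (_ :: Γ1) Γ2 σ rfl) (ih2 (_ :: Γ1) Γ2 σ rfl) h
  | new _ h ih => intro Γ1 Γ2 σ e; exact .new (ih Γ1 Γ2 σ e) h
  | deref _ h1 h2 ih => intro Γ1 Γ2 σ e; exact .deref (ih Γ1 Γ2 σ e) h1 h2
  | assign _ _ h ih1 ih2 =>
    intro Γ1 Γ2 σ e; exact .assign (ih1 Γ1 Γ2 σ e) (ih2 Γ1 Γ2 σ e) h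
  | sub _ h1 h2 ih => intro Γ1 Γ2 σ e; exact .sub (ih Γ1 Γ2 σ e) h1 h2

theorem FGTyped.shift_zero {L : Type} [Lattice L] [BoundedOrder L] {Γ : List (FGTy L)} {pc : L}
    {e : Exp} {τ : FGTy L} (h : FGTyped Γ pc e τ) (σ : FGTy L) :
    FGTyped (σ :: Γ) pc (e.shift 0) τ :=
  h.shift_mid [] Γ σ rfl

theorem FGTyped.lower_pc {L : Type} [Lattice L] [BoundedOrder L] {Γ : List (FGTy L)} {pc pc' : L}
    {e : Exp} {τ : FGTy L} (h : FGTyped Γ pc e τ) (hpc : pc' ≤ pc) : FGTyped Γ pc' e τ :=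
  .sub h (FGSub.refl _) hpc

/-- CG code is pure until forced, so its translation typechecks under every pc; equivalently,
under pc `⊤`. -/
theorem CG2FG.typed {L : Type} [Lattice L] [BoundedOrder L] {Γ : List (CGTy L)}
    {e : Exp} {τ : CGTy L} {eF : Exp} (h : CG2FG Γ e τ eF) :
    FGTyped (Γ.map toFG) ⊤ eF (toFG τ) := by
  induction h with
  | var h => exact .var (by simp [h])
  | tt => exact .tt
  | ff => exact .ff
  | unit => exact .unit
  | lam _ ih => exact .lam ih
  | app _ _ ih1 ih2 => exact .app ih1 ih2 le_top bot_le
  | pair _ _ ih1 ih2 => exact .pair ih1 ih2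
  | fst _ ih => exact .fst ih bot_le
  | snd _ ih => exact .snd ih bot_le
  | inl _ ih => exact .inl ih
  | inr _ ih => exact .inr ih
  | case _ _ _ ih ih1 ih2 =>
    exact .case ih (ih1.lower_pc le_top) (ih2.lower_pc le_top) bot_le
  | label _ ih =>
    exact .sub (.inl ih) (.sum (FGSub.refl _) (FGSub.refl _) bot_le) le_rfl
  | unlabel _ ih => exact .lam (ih.shift_zero _)
  | toLabeled _ ih =>
    exact .lam (.inl (.app ((ih.shift_zero _).lower_pc le_top) .unit (by simp) bot_le))
  | ret _ ih => exact .lam (.inl (ih.shift_zero _))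
  | bind _ _ h1 h2 h3 h4 ih1 ih2 =>
    refine .lam (.case (.app ((ih1.shift_zero _).lower_pc le_top) .unit (by simpa using h1) bot_le)
      (.app ((ih2.shift_mid [_] _ _ rfl).lower_pc le_top) .unit ?_ bot_le)
      (.sub (.inr .unit) (.sum (FGSub.refl _) (FGSub.refl _) bot_le) le_rfl) h4)
    simp [h2, h3]
  | new _ ih =>
    exact .lam (.inl (.new ((ih.shift_zero _).lower_pc le_top) le_rfl))
  | deref _ ih => exact .lam (.inl (.deref (ih.shift_zero _) (FGSub.refl _) bot_le))
  | assign _ _ ih1 ih2 =>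
    exact .lam (.inl (.assign ((ih1.shift_zero _).lower_pc le_top)
      ((ih2.shift_zero _).lower_pc le_top) (by simp [FGTy.lab])))
  | sub _ h ih => exact .sub ih h.toFG_sub le_rfl

/-! ### A generic typed relation between two terms -/

/-- The congruence closure of the FG typing rules, relating two terms of the same type.
`Lc n m τ` says that locations `n` and `m` are related and store contents of type `τ`;
`H v v' τ` is an additional clause relating closed terms.  With `H` empty and `Lc` the diagonal of
a store typing this is unary typing; with `H` relating arbitrary values of secret type it is low
equivalence. -/
inductive TRel {L : Type} [Lattice L] [BoundedOrder L]
    (H : Exp → Exp → FGTy L → Prop) (Lc : ℕ → ℕ → FGTy L → Prop) :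
    List (FGTy L) → L → Exp → Exp → FGTy L → Prop where
  | var {Γ pc n τ} : Γ[n]? = some τ → TRel H Lc Γ pc (.var n) (.var n) τ
  | tt {Γ pc} : TRel H Lc Γ pc .tt .tt (.bool ⊥)
  | ff {Γ pc} : TRel H Lc Γ pc .ff .ff (.bool ⊥)
  | unit {Γ pc} : TRel H Lc Γ pc .unit .unit (.unit ⊥)
  | loc {Γ pc n m τ} : Lc n m τ → TRel H Lc Γ pc (.loc n) (.loc m) (.ref τ ⊥)
  | high {Γ pc v v' τ} : H v v' τ → TRel H Lc Γ pc v v' τ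
  | lam {Γ pc le e e' τ1 τ2} : TRel H Lc (τ1 :: Γ) le e e' τ2 →
      TRel H Lc Γ pc (.lam e) (.lam e') (.fn τ1 le τ2 ⊥)
  | app {Γ pc e1 e1' e2 e2' τ1 le τ2 l} : TRel H Lc Γ pc e1 e1' (.fn τ1 le τ2 l) →
      TRel H Lc Γ pc e2 e2' τ1 → l ⊔ pc ≤ le → l ≤ τ2.lab →
      TRel H Lc Γ pc (.app e1 e2) (.app e1' e2') τ2
  | pair {Γ pc e1 e1' e2 e2' τ1 τ2} : TRel H Lc Γ pc e1 e1' τ1 → TRel H Lc Γ pc e2 e2' τ2 →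
      TRel H Lc Γ pc (.pair e1 e2) (.pair e1' e2') (.prod τ1 τ2 ⊥)
  | fst {Γ pc e e' τ1 τ2 l} : TRel H Lc Γ pc e e' (.prod τ1 τ2 l) → l ≤ τ1.lab →
      TRel H Lc Γ pc (.fst e) (.fst e') τ1
  | snd {Γ pc e e' τ1 τ2 l} : TRel H Lc Γ pc e e' (.prod τ1 τ2 l) → l ≤ τ2.lab →
      TRel H Lc Γ pc (.snd e) (.snd e') τ2
  | inl {Γ pc e e' τ1 τ2} : TRel H Lc Γ pc e e' τ1 →
      TRel H Lc Γ pc (.inl e) (.inl e') (.sum τ1 τ2 ⊥)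
  | inr {Γ pc e e' τ1 τ2} : TRel H Lc Γ pc e e' τ2 →
      TRel H Lc Γ pc (.inr e) (.inr e') (.sum τ1 τ2 ⊥)
  | case {Γ pc e e' e1 e1' e2 e2' τ1 τ2 l τ} : TRel H Lc Γ pc e e' (.sum τ1 τ2 l) →
      TRel H Lc (τ1 :: Γ) (pc ⊔ l) e1 e1' τ → TRel H Lc (τ2 :: Γ) (pc ⊔ l) e2 e2' τ →
      l ≤ τ.lab → TRel H Lc Γ pc (.case e e1 e2) (.case e' e1' e2') τ
  | new {Γ pc e e' τ} : TRel H Lc Γ pc e e' τ → pc ≤ τ.lab →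
      TRel H Lc Γ pc (.new e) (.new e') (.ref τ ⊥)
  | deref {Γ pc e e' τ τ' l} : TRel H Lc Γ pc e e' (.ref τ l) → FGSub τ τ' → l ≤ τ'.lab →
      TRel H Lc Γ pc (.deref e) (.deref e') τ'
  | assign {Γ pc e1 e1' e2 e2' τ l} : TRel H Lc Γ pc e1 e1' (.ref τ l) →
      TRel H Lc Γ pc e2 e2' τ → pc ⊔ l ≤ τ.lab →
      TRel H Lc Γ pc (.assign e1 e2) (.assign e1' e2') (.unit ⊥)
  | sub {Γ pc pc' e e' τ τ'} : TRel H Lc Γ pc' e e' τ' → FGSub τ' τ → pc ≤ pc' →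
      TRel H Lc Γ pc e e' τ

/-- Shifting and substitution do not affect the term. -/
def Closed (v : Exp) : Prop := ∀ k, v.shift k = v ∧ ∀ w, v.subst w k = v

section Generic

variable {L : Type} [Lattice L] [BoundedOrder L]
  {H H' : Exp → Exp → FGTy L → Prop} {Lc Lc' : ℕ → ℕ → FGTy L → Prop}

theorem FGTyped.trel {Γ : List (FGTy L)} {pc : L} {e : Exp} {τ : FGTy L}
    (h : FGTyped Γ pc e τ) : TRel H Lc Γ pc e e τ := by
  induction h with
  | var h => exact .var h
  | tt => exact .tt
  | ff => exact .ff
  | unit => exact .unit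
  | lam _ ih => exact .lam ih
  | app _ _ h1 h2 ih1 ih2 => exact .app ih1 ih2 h1 h2
  | pair _ _ ih1 ih2 => exact .pair ih1 ih2
  | fst _ h ih => exact .fst ih h
  | snd _ h ih => exact .snd ih h
  | inl _ ih => exact .inl ih
  | inr _ ih => exact .inr ih
  | case _ _ _ h ih ih1 ih2 => exact .case ih ih1 ih2 h
  | new _ h ih => exact .new ih h
  | deref _ h1 h2 ih => exact .deref ih h1 h2
  | assign _ _ h ih1 ih2 => exact .assign ih1 ih2 h
  | sub _ h1 h2 ih => exact .sub ih h1 h2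

/-- Weakening by extra hypotheses at the outer end of the context, where no index moves. -/
theorem TRel.weaken {Γ : List (FGTy L)} {pc : L} {e e' : Exp} {τ : FGTy L}
    (h : TRel H Lc Γ pc e e' τ) (Δ : List (FGTy L)) : TRel H Lc (Γ ++ Δ) pc e e' τ := by
  induction h with
  | var h => exact .var (by rw [List.getElem?_append_left (List.getElem?_eq_some_iff.1 h).1, h])
  | tt => exact .tt
  | ff => exact .ff
  | unit => exact .unit
  | loc h => exact .loc h
  | high h => exact .high h
  | lam _ ih => exact .lam ih
  | app _ _ h1 h2 ih1 ih2 => exact .app ih1 ih2 h1 h2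
  | pair _ _ ih1 ih2 => exact .pair ih1 ih2
  | fst _ h ih => exact .fst ih h
  | snd _ h ih => exact .snd ih h
  | inl _ ih => exact .inl ih
  | inr _ ih => exact .inr ih
  | case _ _ _ h ih ih1 ih2 => exact .case ih ih1 ih2 h
  | new _ h ih => exact .new ih h
  | deref _ h1 h2 ih => exact .deref ih h1 h2
  | assign _ _ h ih1 ih2 => exact .assign ih1 ih2 h
  | sub _ h1 h2 ih => exact .sub ih h1 h2

theorem TRel.mono (hH : ∀ v v' τ, H v v' τ → H' v v' τ) (hL : ∀ n m τ, Lc n m τ → Lc' n m τ)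
    {Γ : List (FGTy L)} {pc : L} {e e' : Exp} {τ : FGTy L}
    (h : TRel H Lc Γ pc e e' τ) : TRel H' Lc' Γ pc e e' τ := by
  induction h with
  | var h => exact .var h
  | tt => exact .tt
  | ff => exact .ff
  | unit => exact .unit
  | loc h => exact .loc (hL _ _ _ h)
  | high h => exact .high (hH _ _ _ h)
  | lam _ ih => exact .lam ih
  | app _ _ h1 h2 ih1 ih2 => exact .app ih1 ih2 h1 h2
  | pair _ _ ih1 ih2 => exact .pair ih1 ih2
  | fst _ h ih => exact .fst ih h
  | snd _ h ih => exact .snd ih h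
  | inl _ ih => exact .inl ih
  | inr _ ih => exact .inr ih
  | case _ _ _ h ih ih1 ih2 => exact .case ih ih1 ih2 h
  | new _ h ih => exact .new ih h
  | deref _ h1 h2 ih => exact .deref ih h1 h2
  | assign _ _ h ih1 ih2 => exact .assign ih1 ih2 h
  | sub _ h1 h2 ih => exact .sub ih h1 h2

theorem TRel.symm {Γ : List (FGTy L)} {pc : L} {e e' : Exp} {τ : FGTy L}
    (h : TRel H Lc Γ pc e e' τ) :
    TRel (fun v v' τ => H v' v τ) (fun n m τ => Lc m n τ) Γ pc e' e τ := by
  induction h with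
  | var h => exact .var h
  | tt => exact .tt
  | ff => exact .ff
  | unit => exact .unit
  | loc h => exact .loc h
  | high h => exact .high h
  | lam _ ih => exact .lam ih
  | app _ _ h1 h2 ih1 ih2 => exact .app ih1 ih2 h1 h2
  | pair _ _ ih1 ih2 => exact .pair ih1 ih2
  | fst _ h ih => exact .fst ih h
  | snd _ h ih => exact .snd ih h
  | inl _ ih => exact .inl ih
  | inr _ ih => exact .inr ih
  | case _ _ _ h ih ih1 ih2 => exact .case ih ih1 ih2 h
  | new _ h ih => exact .new ih h
  | deref _ h1 h2 ih => exact .deref ih h1 h2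
  | assign _ _ h ih1 ih2 => exact .assign ih1 ih2 h
  | sub _ h1 h2 ih => exact .sub ih h1 h2

/-- The left projection of a relation, as a relation of each left term with itself. -/
theorem TRel.left (hH : ∀ v v' τ, H v v' τ → ∀ Γ pc, TRel H' Lc' Γ pc v v τ)
    (hL : ∀ n m τ, Lc n m τ → Lc' n n τ)
    {Γ : List (FGTy L)} {pc : L} {e e' : Exp} {τ : FGTy L}
    (h : TRel H Lc Γ pc e e' τ) : TRel H' Lc' Γ pc e e τ := by
  induction h with
  | var h => exact .var h
  | tt => exact .tt
  | ff => exact .ff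
  | unit => exact .unit
  | loc h => exact .loc (hL _ _ _ h)
  | high h => exact hH _ _ _ h _ _
  | lam _ ih => exact .lam ih
  | app _ _ h1 h2 ih1 ih2 => exact .app ih1 ih2 h1 h2
  | pair _ _ ih1 ih2 => exact .pair ih1 ih2
  | fst _ h ih => exact .fst ih h
  | snd _ h ih => exact .snd ih h
  | inl _ ih => exact .inl ih
  | inr _ ih => exact .inr ih
  | case _ _ _ h ih ih1 ih2 => exact .case ih ih1 ih2 h
  | new _ h ih => exact .new ih h
  | deref _ h1 h2 ih => exact .deref ih h1 h2
  | assign _ _ h ih1 ih2 => exact .assign ih1 ih2 h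
  | sub _ h1 h2 ih => exact .sub ih h1 h2

theorem TRel.lower_pc {Γ : List (FGTy L)} {pc pc' : L} {e e' : Exp} {τ : FGTy L}
    (h : TRel H Lc Γ pc e e' τ) (hpc : pc' ≤ pc) : TRel H Lc Γ pc' e e' τ :=
  .sub h (FGSub.refl _) hpc

theorem TRel.closed_left (hH : ∀ v v' τ, H v v' τ → Closed v)
    {Γ : List (FGTy L)} {pc : L} {e e' : Exp} {τ : FGTy L} (h : TRel H Lc Γ pc e e' τ) :
    ∀ k, Γ.length ≤ k → e.shift k = e ∧ ∀ w, e.subst w k = e := by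
  induction h with
  | @var Γ pc n τ h =>
    intro k hk
    have := (List.getElem?_eq_some_iff.1 h).1
    simp only [Exp.shift, Exp.subst]
    simp [show n < k by omega, show n ≠ k by omega, show ¬ k < n by omega]
  | high h => intro k _; exact hH _ _ _ h k
  | sub _ _ _ ih => exact ih
  | tt | ff | unit | loc => intro k _; simp [Exp.shift, Exp.subst]
  | lam _ ih =>
    intro k hk
    have := ih (k + 1) (by simpa using hk)
    simp [Exp.shift, Exp.subst, this.1, this.2]
  | app _ _ _ _ ih1 ih2 | pair _ _ ih1 ih2 | assign _ _ _ ih1 ih2 =>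
    intro k hk
    have h1 := ih1 k hk
    have h2 := ih2 k hk
    simp [Exp.shift, Exp.subst, h1.1, h1.2, h2.1, h2.2]
  | fst _ _ ih | snd _ _ ih | inl _ ih | inr _ ih | new _ _ ih | deref _ _ _ ih =>
    intro k hk
    have h1 := ih k hk
    simp [Exp.shift, Exp.subst, h1.1, h1.2]
  | case _ _ _ _ ih ih1 ih2 =>
    intro k hk
    have h0 := ih k hk
    have h1 := ih1 (k + 1) (by simpa using hk)
    have h2 := ih2 (k + 1) (by simpa using hk)
    simp [Exp.shift, Exp.subst, h0.1, h0.2, h1.1, h1.2, h2.1, h2.2]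

theorem TRel.subst_mid (hH : ∀ v v' τ, H v v' τ → Closed v ∧ Closed v')
    {v v' : Exp} {σ : FGTy L} (hv : TRel H Lc [] ⊤ v v' σ)
    {Γ : List (FGTy L)} {pc : L} {e e' : Exp} {τ : FGTy L} (h : TRel H Lc Γ pc e e' τ) :
    ∀ Γ1 Γ2, Γ = Γ1 ++ σ :: Γ2 →
      TRel H Lc (Γ1 ++ Γ2) pc (e.subst v Γ1.length) (e'.subst v' Γ1.length) τ := by
  have c1 : v.shift 0 = v :=
    (hv.closed_left (fun _ _ _ h => (hH _ _ _ h).1) 0 (by simp)).1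
  have c2 : v'.shift 0 = v' :=
    (hv.symm.closed_left (fun _ _ _ h => (hH _ _ _ h).2) 0 (by simp)).1
  induction h with
  | @var Γ pc n τ hn =>
    rintro Γ1 Γ2 rfl
    simp only [Exp.subst]
    rcases lt_trichotomy n Γ1.length with hlt | rfl | hgt
    · simp only [if_neg hlt.ne, if_neg hlt.not_gt]
      refine .var ?_
      rw [List.getElem?_append_left hlt] at hn ⊢
      exact hn
    · simp only [if_true]
      simp at hn
      subst hn
      exact (hv.lower_pc le_top).weaken _
    · simp only [if_neg hgt.ne', if_pos hgt]
      refine .var ?_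
      obtain ⟨m, rfl⟩ : ∃ m, n = m + 1 := ⟨n - 1, by omega⟩
      rw [List.getElem?_append_right (by omega), Nat.sub_add_comm (by omega),
        List.getElem?_cons_succ] at hn
      rw [List.getElem?_append_right (by omega)]
      exact hn
  | high h =>
    intro Γ1 Γ2 _
    rw [((hH _ _ _ h).1 _).2, ((hH _ _ _ h).2 _).2]
    exact .high h
  | tt => intros; exact .tt
  | ff => intros; exact .ff
  | unit => intros; exact .unit
  | loc h => intros; exact .loc h
  | lam _ ih =>
    rintro Γ1 Γ2 rfl
    simp only [Exp.subst, c1, c2]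
    exact .lam (ih (_ :: Γ1) Γ2 rfl)
  | app _ _ h1 h2 ih1 ih2 =>
    intro Γ1 Γ2 e; exact .app (ih1 Γ1 Γ2 e) (ih2 Γ1 Γ2 e) h1 h2
  | pair _ _ ih1 ih2 => intro Γ1 Γ2 e; exact .pair (ih1 Γ1 Γ2 e) (ih2 Γ1 Γ2 e)
  | fst _ h ih => intro Γ1 Γ2 e; exact .fst (ih Γ1 Γ2 e) h
  | snd _ h ih => intro Γ1 Γ2 e; exact .snd (ih Γ1 Γ2 e) h
  | inl _ ih => intro Γ1 Γ2 e; exact .inl (ih Γ1 Γ2 e)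
  | inr _ ih => intro Γ1 Γ2 e; exact .inr (ih Γ1 Γ2 e)
  | case _ _ _ h ih ih1 ih2 =>
    rintro Γ1 Γ2 rfl
    simp only [Exp.subst, c1, c2]
    exact .case (ih Γ1 Γ2 rfl) (ih1 (_ :: Γ1) Γ2 rfl) (ih2 (_ :: Γ1) Γ2 rfl) h
  | new _ h ih => intro Γ1 Γ2 e; exact .new (ih Γ1 Γ2 e) h
  | deref _ h1 h2 ih => intro Γ1 Γ2 e; exact .deref (ih Γ1 Γ2 e) h1 h2
  | assign _ _ h ih1 ih2 =>
    intro Γ1 Γ2 e; exact .assign (ih1 Γ1 Γ2 e) (ih2 Γ1 Γ2 e) h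
  | sub _ h1 h2 ih => intro Γ1 Γ2 e; exact .sub (ih Γ1 Γ2 e) h1 h2

/-! ### Inversion for related values -/

/-- Values have no effects, so their pc is irrelevant. -/
theorem TRel.val_pc {Γ : List (FGTy L)} {pc : L} {v v' : Exp} {τ : FGTy L}
    (h : TRel H Lc Γ pc v v' τ) (hv : FGVal v) : ∀ pc', TRel H Lc Γ pc' v v' τ := by
  induction h with
  | tt => intro _; exact .tt
  | ff => intro _; exact .ff
  | unit => intro _; exact .unit
  | loc h => intro _; exact .loc h
  | high h => intro _; exact .high h
  | lam h => intro _; exact .lam h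
  | pair _ _ ih1 ih2 => intro _; cases hv; exact .pair (ih1 ‹_› _) (ih2 ‹_› _)
  | inl _ ih => intro _; cases hv; exact .inl (ih ‹_› _)
  | inr _ ih => intro _; cases hv; exact .inr (ih ‹_› _)
  | sub _ h1 _ ih => intro _; exact .sub (ih hv _) h1 le_rfl
  | _ => cases hv

theorem TRel.inv_bool {Γ : List (FGTy L)} {pc : L} {v v' : Exp} {τ : FGTy L}
    (h : TRel H Lc Γ pc v v' τ) (hv : FGVal v) : ∀ {l}, τ = .bool l →
    (∃ τ', H v v' τ' ∧ FGSub τ' τ) ∨ v = v' := by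
  induction h with
  | high h => intro _ _; exact .inl ⟨_, h, FGSub.refl _⟩
  | tt | ff => intro _ _; exact .inr rfl
  | sub _ hs _ ih =>
    rintro l rfl
    cases hs with
    | bool hl =>
      rcases ih hv rfl with ⟨τ', h1, h2⟩ | h
      · exact .inl ⟨τ', h1, h2.trans (.bool hl)⟩
      · exact .inr h
  | _ => intro _ e; first | cases e; done | cases hv

theorem TRel.inv_unit {Γ : List (FGTy L)} {pc : L} {v v' : Exp} {τ : FGTy L}
    (h : TRel H Lc Γ pc v v' τ) (hv : FGVal v) : ∀ {l}, τ = .unit l →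
    (∃ τ', H v v' τ' ∧ FGSub τ' τ) ∨ v = v' := by
  induction h with
  | high h => intro _ _; exact .inl ⟨_, h, FGSub.refl _⟩
  | unit => intro _ _; exact .inr rfl
  | sub _ hs _ ih =>
    rintro l rfl
    cases hs with
    | unit hl =>
      rcases ih hv rfl with ⟨τ', h1, h2⟩ | h
      · exact .inl ⟨τ', h1, h2.trans (.unit hl)⟩
      · exact .inr h
  | _ => intro _ e; first | cases e; done | cases hv

theorem TRel.inv_prod {Γ : List (FGTy L)} {pc : L} {v v' : Exp} {τ : FGTy L}
    (h : TRel H Lc Γ pc v v' τ) (hv : FGVal v) : ∀ {τ1 τ2 l}, τ = .prod τ1 τ2 l →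
    (∃ τ', H v v' τ' ∧ FGSub τ' τ) ∨
    ∃ u1 u2 u1' u2', v = .pair u1 u2 ∧ v' = .pair u1' u2' ∧
      TRel H Lc Γ pc u1 u1' τ1 ∧ TRel H Lc Γ pc u2 u2' τ2 := by
  induction h with
  | high h => intro _ _ _ _; exact .inl ⟨_, h, FGSub.refl _⟩
  | pair h1 h2 =>
    intro _ _ _ e; cases e
    exact .inr ⟨_, _, _, _, rfl, rfl, h1, h2⟩
  | sub _ hs hpc ih =>
    rintro τ1 τ2 l rfl
    cases hs with
    | prod s1 s2 hl =>
      rcases ih hv rfl with ⟨τ', h1, h2⟩ | ⟨u1, u2, u1', u2', e, e', h1, h2⟩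
      · exact .inl ⟨τ', h1, h2.trans (.prod s1 s2 hl)⟩
      · exact .inr ⟨u1, u2, u1', u2', e, e', .sub h1 s1 hpc, .sub h2 s2 hpc⟩
  | _ => intro _ _ _ e; first | cases e; done | cases hv

theorem TRel.inv_sum {Γ : List (FGTy L)} {pc : L} {v v' : Exp} {τ : FGTy L}
    (h : TRel H Lc Γ pc v v' τ) (hv : FGVal v) : ∀ {τ1 τ2 l}, τ = .sum τ1 τ2 l →
    (∃ τ', H v v' τ' ∧ FGSub τ' τ) ∨
    (∃ u u', v = .inl u ∧ v' = .inl u' ∧ TRel H Lc Γ pc u u' τ1) ∨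
    (∃ u u', v = .inr u ∧ v' = .inr u' ∧ TRel H Lc Γ pc u u' τ2) := by
  induction h with
  | high h => intro _ _ _ _; exact .inl ⟨_, h, FGSub.refl _⟩
  | inl h =>
    intro _ _ _ e; cases e
    exact .inr (.inl ⟨_, _, rfl, rfl, h⟩)
  | inr h =>
    intro _ _ _ e; cases e
    exact .inr (.inr ⟨_, _, rfl, rfl, h⟩)
  | sub _ hs hpc ih =>
    rintro τ1 τ2 l rfl
    cases hs with
    | sum s1 s2 hl =>
      rcases ih hv rfl with ⟨τ', h1, h2⟩ | ⟨u, u', e, e', h⟩ | ⟨u, u', e, e', h⟩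
      · exact .inl ⟨τ', h1, h2.trans (.sum s1 s2 hl)⟩
      · exact .inr (.inl ⟨u, u', e, e', .sub h s1 hpc⟩)
      · exact .inr (.inr ⟨u, u', e, e', .sub h s2 hpc⟩)
  | _ => intro _ _ _ e; first | cases e; done | cases hv

theorem TRel.inv_ref {Γ : List (FGTy L)} {pc : L} {v v' : Exp} {τ : FGTy L}
    (h : TRel H Lc Γ pc v v' τ) (hv : FGVal v) : ∀ {τ1 l}, τ = .ref τ1 l →
    (∃ τ', H v v' τ' ∧ FGSub τ' τ) ∨
    ∃ n m, v = .loc n ∧ v' = .loc m ∧ Lc n m τ1 := by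
  induction h with
  | high h => intro _ _ _; exact .inl ⟨_, h, FGSub.refl _⟩
  | loc h =>
    intro _ _ e; cases e
    exact .inr ⟨_, _, rfl, rfl, h⟩
  | sub _ hs hpc ih =>
    rintro τ1 l rfl
    cases hs with
    | ref hl =>
      rcases ih hv rfl with ⟨τ', h1, h2⟩ | h
      · exact .inl ⟨τ', h1, h2.trans (.ref hl)⟩
      · exact .inr h
  | _ => intro _ _ e; first | cases e; done | cases hv

/-- The body is typed at a possibly different signature; subtyping relates the two, which avoids
a narrowing lemma for contexts. -/
theorem TRel.inv_fn {Γ : List (FGTy L)} {pc : L} {v v' : Exp} {τ : FGTy L}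
    (h : TRel H Lc Γ pc v v' τ) (hv : FGVal v) : ∀ {τ1 le τ2 l}, τ = .fn τ1 le τ2 l →
    (∃ τ', H v v' τ' ∧ FGSub τ' τ) ∨
    ∃ b b' τ1' le' τ2', v = .lam b ∧ v' = .lam b' ∧ TRel H Lc (τ1' :: Γ) le' b b' τ2' ∧
      FGSub τ1 τ1' ∧ le ≤ le' ∧ FGSub τ2' τ2 := by
  induction h with
  | high h => intro _ _ _ _ _; exact .inl ⟨_, h, FGSub.refl _⟩
  | lam h =>
    intro _ _ _ _ e; cases e
    exact .inr ⟨_, _, _, _, _, rfl, rfl, h, FGSub.refl _, le_rfl, FGSub.refl _⟩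
  | sub _ hs hpc ih =>
    rintro τ1 le τ2 l rfl
    cases hs with
    | fn s1 hle s2 hl =>
      rcases ih hv rfl with ⟨τ', h1, h2⟩ | ⟨b, b', τ1', le', τ2', e, e', h, t1, t2, t3⟩
      · exact .inl ⟨τ', h1, h2.trans (.fn s1 hle s2 hl)⟩
      · exact .inr ⟨b, b', τ1', le', τ2', e, e', h, s1.trans t1, hle.trans t2, t3.trans s2⟩
  | _ => intro _ _ _ _ e; first | cases e; done | cases hv

end Generic

/-! ### Evaluation with a height bound -/

/-- FG evaluation with a bound on the height of the derivation, so that proofs can recurse on the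
height first and on the typing derivation second. -/
inductive EvN : ℕ → Heap → Exp → Heap → Exp → Prop where
  | lam {n h e} : EvN n h (.lam e) h (.lam e)
  | tt {n h} : EvN n h .tt h .tt
  | ff {n h} : EvN n h .ff h .ff
  | unit {n h} : EvN n h .unit h .unit
  | loc {n h k} : EvN n h (.loc k) h (.loc k)
  | app {n h h1 h2 h3 e1 e2 e v2 v} : EvN n h e1 h1 (.lam e) → EvN n h1 e2 h2 v2 →
      EvN n h2 (e.subst v2 0) h3 v → EvN (n + 1) h (.app e1 e2) h3 v
  | pair {n h h1 h2 e1 e2 v1 v2} : EvN n h e1 h1 v1 → EvN n h1 e2 h2 v2 →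
      EvN (n + 1) h (.pair e1 e2) h2 (.pair v1 v2)
  | fst {n h h1 e v1 v2} : EvN n h e h1 (.pair v1 v2) → EvN (n + 1) h (.fst e) h1 v1
  | snd {n h h1 e v1 v2} : EvN n h e h1 (.pair v1 v2) → EvN (n + 1) h (.snd e) h1 v2
  | inl {n h h1 e v} : EvN n h e h1 v → EvN (n + 1) h (.inl e) h1 (.inl v)
  | inr {n h h1 e v} : EvN n h e h1 v → EvN (n + 1) h (.inr e) h1 (.inr v)
  | caseL {n h h1 h2 e e1 e2 v w} : EvN n h e h1 (.inl v) → EvN n h1 (e1.subst v 0) h2 w →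
      EvN (n + 1) h (.case e e1 e2) h2 w
  | caseR {n h h1 h2 e e1 e2 v w} : EvN n h e h1 (.inr v) → EvN n h1 (e2.subst v 0) h2 w →
      EvN (n + 1) h (.case e e1 e2) h2 w
  | new {n h h1 e v} : EvN n h e h1 v → EvN (n + 1) h (.new e) (h1 ++ [v]) (.loc h1.length)
  | deref {n h h1 e k v} : EvN n h e h1 (.loc k) → h1[k]? = some v →
      EvN (n + 1) h (.deref e) h1 v
  | assign {n h h1 h2 e1 e2 k v} : EvN n h e1 h1 (.loc k) → EvN n h1 e2 h2 v →
      EvN (n + 1) h (.assign e1 e2) (h2.set k v) .unit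

theorem EvN.mono {n h e h' v} (H : EvN n h e h' v) : ∀ m, n ≤ m → EvN m h e h' v := by
  induction H with
  | lam => intros; exact .lam
  | tt => intros; exact .tt
  | ff => intros; exact .ff
  | unit => intros; exact .unit
  | loc => intros; exact .loc
  | app _ _ _ ih1 ih2 ih3 =>
    rintro (_ | m) hm; · omega
    exact .app (ih1 m (by omega)) (ih2 m (by omega)) (ih3 m (by omega))
  | pair _ _ ih1 ih2 =>
    rintro (_ | m) hm; · omega
    exact .pair (ih1 m (by omega)) (ih2 m (by omega))
  | fst _ ih => rintro (_ | m) hm; · omega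
                exact .fst (ih m (by omega))
  | snd _ ih => rintro (_ | m) hm; · omega
                exact .snd (ih m (by omega))
  | inl _ ih => rintro (_ | m) hm; · omega
                exact .inl (ih m (by omega))
  | inr _ ih => rintro (_ | m) hm; · omega
                exact .inr (ih m (by omega))
  | caseL _ _ ih1 ih2 =>
    rintro (_ | m) hm; · omega
    exact .caseL (ih1 m (by omega)) (ih2 m (by omega))
  | caseR _ _ ih1 ih2 =>
    rintro (_ | m) hm; · omega
    exact .caseR (ih1 m (by omega)) (ih2 m (by omega))
  | new _ ih => rintro (_ | m) hm; · omega
                exact .new (ih m (by omega))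
  | deref _ hk ih => rintro (_ | m) hm; · omega
                     exact .deref (ih m (by omega)) hk
  | assign _ _ ih1 ih2 =>
    rintro (_ | m) hm; · omega
    exact .assign (ih1 m (by omega)) (ih2 m (by omega))

theorem FGEval.bounded {h e h' v} (H : FGEval h e h' v) : ∃ n, EvN n h e h' v := by
  induction H with
  | lam => exact ⟨0, .lam⟩
  | tt => exact ⟨0, .tt⟩
  | ff => exact ⟨0, .ff⟩
  | unit => exact ⟨0, .unit⟩
  | loc => exact ⟨0, .loc⟩
  | app _ _ _ ih1 ih2 ih3 =>
    obtain ⟨a, ha⟩ := ih1; obtain ⟨b, hb⟩ := ih2; obtain ⟨c, hc⟩ := ih3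
    exact ⟨_, .app (ha.mono (a + b + c) (by omega)) (hb.mono _ (by omega))
      (hc.mono _ (by omega))⟩
  | pair _ _ ih1 ih2 =>
    obtain ⟨a, ha⟩ := ih1; obtain ⟨b, hb⟩ := ih2
    exact ⟨_, .pair (ha.mono (a + b) (by omega)) (hb.mono _ (by omega))⟩
  | fst _ ih => obtain ⟨a, ha⟩ := ih; exact ⟨_, .fst ha⟩
  | snd _ ih => obtain ⟨a, ha⟩ := ih; exact ⟨_, .snd ha⟩
  | inl _ ih => obtain ⟨a, ha⟩ := ih; exact ⟨_, .inl ha⟩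
  | inr _ ih => obtain ⟨a, ha⟩ := ih; exact ⟨_, .inr ha⟩
  | caseL _ _ ih1 ih2 =>
    obtain ⟨a, ha⟩ := ih1; obtain ⟨b, hb⟩ := ih2
    exact ⟨_, .caseL (ha.mono (a + b) (by omega)) (hb.mono _ (by omega))⟩
  | caseR _ _ ih1 ih2 =>
    obtain ⟨a, ha⟩ := ih1; obtain ⟨b, hb⟩ := ih2
    exact ⟨_, .caseR (ha.mono (a + b) (by omega)) (hb.mono _ (by omega))⟩
  | new _ ih => obtain ⟨a, ha⟩ := ih; exact ⟨_, .new ha⟩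
  | deref _ hk ih => obtain ⟨a, ha⟩ := ih; exact ⟨_, .deref ha hk⟩
  | assign _ _ ih1 ih2 =>
    obtain ⟨a, ha⟩ := ih1; obtain ⟨b, hb⟩ := ih2
    exact ⟨_, .assign (ha.mono (a + b) (by omega)) (hb.mono _ (by omega))⟩

theorem EvN.toEval {n h e h' v} (H : EvN n h e h' v) : FGEval h e h' v := by
  induction H with
  | lam => exact .lam
  | tt => exact .tt
  | ff => exact .ff
  | unit => exact .unit
  | loc => exact .loc
  | app _ _ _ ih1 ih2 ih3 => exact .app ih1 ih2 ih3
  | pair _ _ ih1 ih2 => exact .pair ih1 ih2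
  | fst _ ih => exact .fst ih
  | snd _ ih => exact .snd ih
  | inl _ ih => exact .inl ih
  | inr _ ih => exact .inr ih
  | caseL _ _ ih1 ih2 => exact .caseL ih1 ih2
  | caseR _ _ ih1 ih2 => exact .caseR ih1 ih2
  | new _ ih => exact .new ih
  | deref _ hk ih => exact .deref ih hk
  | assign _ _ ih1 ih2 => exact .assign ih1 ih2

theorem FGEval.of_val {v : Exp} (hv : FGVal v) :
    ∀ {h h' w}, FGEval h v h' w → h' = h ∧ w = v := by
  induction hv with
  | pair _ _ ih1 ih2 =>
    intro h h' w H
    cases H with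
    | pair a b =>
      obtain ⟨rfl, rfl⟩ := ih1 a
      obtain ⟨rfl, rfl⟩ := ih2 b
      exact ⟨rfl, rfl⟩
  | inl _ ih | inr _ ih =>
    intro h h' w H
    cases H
    obtain ⟨rfl, rfl⟩ := ih ‹_›
    exact ⟨rfl, rfl⟩
  | _ => intro h h' w H; cases H; exact ⟨rfl, rfl⟩

/-! ### Unary typing, preservation and confinement -/

section Semantics

variable {L : Type} [Lattice L] [BoundedOrder L]

theorem List.IsPrefix.get_some {α : Type} {S S' : List α} (hp : S <+: S') {n : ℕ} {x : α}
    (h : S[n]? = some x) : S'[n]? = some x := by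
  obtain ⟨t, rfl⟩ := hp
  rw [List.getElem?_append_left (List.getElem?_eq_some_iff.1 h).1, h]

/-- Unary typing under the store typing `S`; it only relates a term to itself. -/
def UTy (S : List (FGTy L)) : List (FGTy L) → L → Exp → Exp → FGTy L → Prop :=
  TRel (fun _ _ _ => False) (fun n m τ => n = m ∧ S[n]? = some τ)

/-- Closed values of type `τ` under the store typing `S`. -/
def VTy (S : List (FGTy L)) (v : Exp) (τ : FGTy L) : Prop := FGVal v ∧ UTy S [] ⊤ v v τ

/-- The heap `h` matches the store typing `S`. -/
def HTy (S : List (FGTy L)) (h : Heap) : Prop :=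
  h.length = S.length ∧ ∀ (n : ℕ) (τ : FGTy L) (v : Exp), S[n]? = some τ → h[n]? = some v → VTy S v τ

/-- Locations with contents visible at level `a` are unchanged from `h` to `h'`. -/
def Unch (a : L) (S : List (FGTy L)) (h h' : Heap) : Prop :=
  ∀ (n : ℕ) (τ : FGTy L), S[n]? = some τ → τ.lab ≤ a → h'[n]? = h[n]?

theorem UTy.mono {S S' : List (FGTy L)} (hp : S <+: S') {Γ : List (FGTy L)} {pc : L} {e e' : Exp}
    {τ : FGTy L} (h : UTy S Γ pc e e' τ) : UTy S' Γ pc e e' τ :=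
  TRel.mono (fun _ _ _ => id) (fun _ _ _ h => ⟨h.1, hp.get_some h.2⟩) h

theorem VTy.mono {S S' : List (FGTy L)} (hp : S <+: S') {v : Exp} {τ : FGTy L}
    (h : VTy S v τ) : VTy S' v τ := ⟨h.1, h.2.mono hp⟩

theorem VTy.sub {S : List (FGTy L)} {v : Exp} {τ τ' : FGTy L} (h : VTy S v τ)
    (hs : FGSub τ τ') : VTy S v τ' := ⟨h.1, TRel.sub h.2 hs le_rfl⟩

theorem VTy.closed {S : List (FGTy L)} {v : Exp} {τ : FGTy L} (h : VTy S v τ) : Closed v :=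
  fun k => TRel.closed_left (fun _ _ _ h => h.elim) h.2 k (Nat.zero_le _)

theorem UTy.subst {S : List (FGTy L)} {σ τ : FGTy L} {pc : L} {e e' v : Exp}
    (h : UTy S [σ] pc e e' τ) (hv : VTy S v σ) :
    UTy S [] pc (e.subst v 0) (e'.subst v 0) τ :=
  TRel.subst_mid (fun _ _ _ h => h.elim) hv.2 h [] [] rfl

theorem UTy.left {S Γ : List (FGTy L)} {τ : FGTy L} {pc : L} {e e' : Exp}
    (h : UTy S Γ pc e e' τ) : UTy S Γ pc e e τ :=
  TRel.left (fun _ _ _ h => h.elim) (fun _ _ _ h => ⟨rfl, h.2⟩) h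

theorem VTy.prod_inv {S : List (FGTy L)} {v1 v2 : Exp} {τ1 τ2 : FGTy L} {l : L}
    (h : VTy S (.pair v1 v2) (.prod τ1 τ2 l)) : VTy S v1 τ1 ∧ VTy S v2 τ2 := by
  obtain ⟨hv, h⟩ := h
  rcases TRel.inv_prod h hv rfl with ⟨_, h, _⟩ | ⟨u1, u2, u1', u2', e, e', h1, h2⟩
  · exact h.elim
  · cases hv; cases e; cases e'
    exact ⟨⟨‹_›, h1⟩, ⟨‹_›, h2⟩⟩

theorem VTy.inl_inv {S : List (FGTy L)} {v : Exp} {τ1 τ2 : FGTy L} {l : L}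
    (h : VTy S (.inl v) (.sum τ1 τ2 l)) : VTy S v τ1 := by
  obtain ⟨hv, h⟩ := h
  rcases TRel.inv_sum h hv rfl with ⟨_, h, _⟩ | ⟨u, u', e, e', h⟩ | ⟨u, u', e, e', h⟩
  · exact h.elim
  · cases hv; cases e; cases e'
    exact ⟨‹_›, h⟩
  · cases e

theorem VTy.inr_inv {S : List (FGTy L)} {v : Exp} {τ1 τ2 : FGTy L} {l : L}
    (h : VTy S (.inr v) (.sum τ1 τ2 l)) : VTy S v τ2 := by
  obtain ⟨hv, h⟩ := h
  rcases TRel.inv_sum h hv rfl with ⟨_, h, _⟩ | ⟨u, u', e, e', h⟩ | ⟨u, u', e, e', h⟩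
  · exact h.elim
  · cases e
  · cases hv; cases e; cases e'
    exact ⟨‹_›, h⟩

theorem VTy.loc_inv {S : List (FGTy L)} {n : ℕ} {τ : FGTy L} {l : L}
    (h : VTy S (.loc n) (.ref τ l)) : S[n]? = some τ := by
  obtain ⟨hv, h⟩ := h
  rcases TRel.inv_ref h hv rfl with ⟨_, h, _⟩ | ⟨n', m, e, e', h⟩
  · exact h.elim
  · cases e
    exact h.2

/-- The body of a function value, instantiated with an argument of the declared type. -/
theorem VTy.lam_inv {S S' : List (FGTy L)} {b u : Exp} {τ1 τ2 : FGTy L} {le l : L}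
    (h : VTy S (.lam b) (.fn τ1 le τ2 l)) (hp : S <+: S') (hu : VTy S' u τ1) :
    UTy S' [] le (b.subst u 0) (b.subst u 0) τ2 := by
  obtain ⟨hv, h⟩ := h
  rcases TRel.inv_fn h hv rfl with ⟨_, h, _⟩ | ⟨b1, b2, τ1', le', τ2', e, e', h, s1, s2, s3⟩
  · exact h.elim
  · cases e; cases e'
    exact TRel.sub (UTy.subst (UTy.mono hp h) (hu.sub s1)) s3 s2

theorem HTy.get {S : List (FGTy L)} {h : Heap} (H : HTy S h) {n : ℕ} {τ : FGTy L}
    (hn : S[n]? = some τ) : ∃ v, h[n]? = some v := by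
  have := (List.getElem?_eq_some_iff.1 hn).1
  exact ⟨_, List.getElem?_eq_getElem (by rw [H.1]; exact this)⟩

theorem HTy.snoc {S : List (FGTy L)} {h : Heap} (H : HTy S h) {v : Exp} {τ : FGTy L}
    (hv : VTy S v τ) : HTy (S ++ [τ]) (h ++ [v]) := by
  refine ⟨by simp [H.1], fun n σ w h1 h2 => VTy.mono (S := S) ⟨_, rfl⟩ ?_⟩
  rcases lt_or_ge n S.length with hn | hn
  · rw [List.getElem?_append_left hn] at h1
    rw [List.getElem?_append_left (by rw [H.1]; exact hn)] at h2
    exact H.2 n σ w h1 h2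
  · have hb := (List.getElem?_eq_some_iff.1 h1).1
    have : n = S.length := by simp at hb; omega
    subst this
    rw [← H.1] at h2
    simp at h1 h2
    subst h1 h2
    exact hv

theorem HTy.set {S : List (FGTy L)} {h : Heap} (H : HTy S h) {n : ℕ} {v : Exp} {τ : FGTy L}
    (hn : S[n]? = some τ) (hv : VTy S v τ) : HTy S (h.set n v) := by
  refine ⟨by simp [H.1], fun m σ w h1 h2 => ?_⟩
  by_cases hm : n = m
  · subst hm
    have hlt : n < h.length := by rw [H.1]; exact (List.getElem?_eq_some_iff.1 hn).1
    rw [List.getElem?_set_self hlt] at h2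
    rw [hn] at h1
    cases h1; cases h2
    exact hv
  · rw [List.getElem?_set_ne hm] at h2
    exact H.2 m σ w h1 h2

theorem Unch.trans {a : L} {S S' : List (FGTy L)} {h h' h'' : Heap} (hp : S <+: S')
    (h1 : Unch a S h h') (h2 : Unch a S' h' h'') : Unch a S h h'' :=
  fun n τ hn hl => (h2 n τ (hp.get_some hn) hl).trans (h1 n τ hn hl)

theorem Unch.snoc {a : L} {S : List (FGTy L)} {h : Heap} (H : HTy S h) (v : Exp) :
    Unch a S h (h ++ [v]) := fun n τ hn _ => by
  rw [List.getElem?_append_left]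
  rw [H.1]; exact (List.getElem?_eq_some_iff.1 hn).1

theorem Unch.set {a : L} {S : List (FGTy L)} {h : Heap} {n : ℕ} {τ : FGTy L}
    (hn : S[n]? = some τ) (hτ : ¬ τ.lab ≤ a) (v : Exp) : Unch a S h (h.set n v) := by
  intro m σ hm hl
  refine List.getElem?_set_ne ?_
  rintro rfl
  rw [hn] at hm
  cases hm
  exact hτ hl

/-- Type preservation, together with confinement: under a pc not below the observer's level,
evaluation leaves the observable part of the heap alone. -/
theorem preservation (a : L) : ∀ (n : ℕ) (S : List (FGTy L)) (pc : L) (e e' : Exp) (τ : FGTy L)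
    (h h' : Heap) (v : Exp), UTy S [] pc e e' τ → HTy S h → EvN n h e h' v →
    ∃ S', S <+: S' ∧ HTy S' h' ∧ VTy S' v τ ∧ (¬ pc ≤ a → Unch a S h h') := by
  intro n
  induction n using Nat.strong_induction_on with
  | _ n ih =>
  intro S pc e e' τ h h' v hR
  generalize hΓ : ([] : List (FGTy L)) = Γ at hR
  unfold UTy at hR
  induction hR generalizing h h' v with
  | var hn => subst hΓ; simp at hn
  | tt => intro hh hE; cases hE; exact ⟨S, List.prefix_rfl, hh, ⟨.tt, .tt⟩, fun _ _ _ _ _ => rfl⟩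
  | ff => intro hh hE; cases hE; exact ⟨S, List.prefix_rfl, hh, ⟨.ff, .ff⟩, fun _ _ _ _ _ => rfl⟩
  | unit =>
    intro hh hE; cases hE; exact ⟨S, List.prefix_rfl, hh, ⟨.unit, .unit⟩, fun _ _ _ _ _ => rfl⟩
  | loc hl =>
    intro hh hE; cases hE
    exact ⟨S, List.prefix_rfl, hh, ⟨.loc, .loc ⟨rfl, hl.2⟩⟩, fun _ _ _ _ _ => rfl⟩
  | high hf => exact hf.elim
  | lam hb =>
    intro hh hE; subst hΓ; cases hE
    exact ⟨S, List.prefix_rfl, hh, ⟨.lam, .lam (UTy.left hb)⟩, fun _ _ _ _ _ => rfl⟩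
  | app h1 h2 hle _ =>
    intro hh hE; subst hΓ
    cases hE with
    | app E1 E2 E3 =>
      obtain ⟨S1, p1, hh1, v1, u1⟩ := ih _ (Nat.lt_succ_self _) _ _ _ _ _ _ _ _ h1 hh E1
      obtain ⟨S2, p2, hh2, v2, u2⟩ :=
        ih _ (Nat.lt_succ_self _) _ _ _ _ _ _ _ _ (UTy.mono p1 h2) hh1 E2
      obtain ⟨S3, p3, hh3, v3, u3⟩ :=
        ih _ (Nat.lt_succ_self _) _ _ _ _ _ _ _ _ (v1.lam_inv p2 v2) hh2 E3
      refine ⟨S3, p1.trans (p2.trans p3), hh3, v3, fun hpc => ?_⟩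
      exact .trans p1 (u1 hpc) (.trans p2 (u2 hpc)
        (u3 fun h => hpc ((le_sup_right.trans hle).trans h)))
  | pair h1 h2 =>
    intro hh hE; subst hΓ
    cases hE with
    | pair E1 E2 =>
      obtain ⟨S1, p1, hh1, v1, u1⟩ := ih _ (Nat.lt_succ_self _) _ _ _ _ _ _ _ _ h1 hh E1
      obtain ⟨S2, p2, hh2, v2, u2⟩ :=
        ih _ (Nat.lt_succ_self _) _ _ _ _ _ _ _ _ (UTy.mono p1 h2) hh1 E2
      exact ⟨S2, p1.trans p2, hh2, ⟨.pair v1.1 v2.1, .pair (v1.mono p2).2 v2.2⟩,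
        fun hpc => .trans p1 (u1 hpc) (u2 hpc)⟩
  | fst h1 _ =>
    intro hh hE; subst hΓ
    cases hE with
    | fst E1 =>
      obtain ⟨S1, p1, hh1, v1, u1⟩ := ih _ (Nat.lt_succ_self _) _ _ _ _ _ _ _ _ h1 hh E1
      exact ⟨S1, p1, hh1, v1.prod_inv.1, u1⟩
  | snd h1 _ =>
    intro hh hE; subst hΓ
    cases hE with
    | snd E1 =>
      obtain ⟨S1, p1, hh1, v1, u1⟩ := ih _ (Nat.lt_succ_self _) _ _ _ _ _ _ _ _ h1 hh E1
      exact ⟨S1, p1, hh1, v1.prod_inv.2, u1⟩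
  | inl h1 =>
    intro hh hE; subst hΓ
    cases hE with
    | inl E1 =>
      obtain ⟨S1, p1, hh1, v1, u1⟩ := ih _ (Nat.lt_succ_self _) _ _ _ _ _ _ _ _ h1 hh E1
      exact ⟨S1, p1, hh1, ⟨.inl v1.1, .inl v1.2⟩, u1⟩
  | inr h1 =>
    intro hh hE; subst hΓ
    cases hE with
    | inr E1 =>
      obtain ⟨S1, p1, hh1, v1, u1⟩ := ih _ (Nat.lt_succ_self _) _ _ _ _ _ _ _ _ h1 hh E1
      exact ⟨S1, p1, hh1, ⟨.inr v1.1, .inr v1.2⟩, u1⟩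
  | case h0 h1 h2 _ =>
    intro hh hE; subst hΓ
    cases hE with
    | caseL E1 E2 =>
      obtain ⟨S1, p1, hh1, v1, u1⟩ := ih _ (Nat.lt_succ_self _) _ _ _ _ _ _ _ _ h0 hh E1
      obtain ⟨S2, p2, hh2, v2, u2⟩ := ih _ (Nat.lt_succ_self _) _ _ _ _ _ _ _ _
        (UTy.subst (UTy.mono p1 h1) v1.inl_inv) hh1 E2
      exact ⟨S2, p1.trans p2, hh2, v2,
        fun hpc => .trans p1 (u1 hpc) (u2 fun h => hpc (le_sup_left.trans h))⟩
    | caseR E1 E2 =>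
      obtain ⟨S1, p1, hh1, v1, u1⟩ := ih _ (Nat.lt_succ_self _) _ _ _ _ _ _ _ _ h0 hh E1
      obtain ⟨S2, p2, hh2, v2, u2⟩ := ih _ (Nat.lt_succ_self _) _ _ _ _ _ _ _ _
        (UTy.subst (UTy.mono p1 h2) v1.inr_inv) hh1 E2
      exact ⟨S2, p1.trans p2, hh2, v2,
        fun hpc => .trans p1 (u1 hpc) (u2 fun h => hpc (le_sup_left.trans h))⟩
  | @new _ _ _ _ τ h1 _ =>
    intro hh hE; subst hΓ
    cases hE with
    | new E1 =>
      obtain ⟨S1, p1, hh1, v1, u1⟩ := ih _ (Nat.lt_succ_self _) _ _ _ _ _ _ _ _ h1 hh E1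
      refine ⟨S1 ++ [τ], p1.trans ⟨_, rfl⟩, hh1.snoc v1, ⟨.loc, .loc ⟨rfl, ?_⟩⟩,
        fun hpc => .trans p1 (u1 hpc) (.snoc hh1 _)⟩
      simp [hh1.1]
  | deref h1 hs _ =>
    intro hh hE; subst hΓ
    cases hE with
    | deref E1 hk =>
      obtain ⟨S1, p1, hh1, v1, u1⟩ := ih _ (Nat.lt_succ_self _) _ _ _ _ _ _ _ _ h1 hh E1
      exact ⟨S1, p1, hh1, (hh1.2 _ _ _ v1.loc_inv hk).sub hs, u1⟩
  | assign h1 h2 hl =>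
    intro hh hE; subst hΓ
    cases hE with
    | assign E1 E2 =>
      obtain ⟨S1, p1, hh1, v1, u1⟩ := ih _ (Nat.lt_succ_self _) _ _ _ _ _ _ _ _ h1 hh E1
      obtain ⟨S2, p2, hh2, v2, u2⟩ :=
        ih _ (Nat.lt_succ_self _) _ _ _ _ _ _ _ _ (UTy.mono p1 h2) hh1 E2
      have hn := p2.get_some v1.loc_inv
      exact ⟨S2, p1.trans p2, hh2.set hn v2, ⟨.unit, .unit⟩, fun hpc =>
        .trans p1 (u1 hpc) (.trans p2 (u2 hpc)
          (.set hn (fun h => hpc ((le_sup_left.trans hl).trans h)) _))⟩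
  | sub _ hs hpc ih' =>
    intro hh hE
    obtain ⟨S1, p1, hh1, v1, u1⟩ := ih' _ _ _ hΓ hh hE
    exact ⟨S1, p1, hh1, v1.sub hs, fun h => u1 fun h' => h (hpc.trans h')⟩

/-! ### Low equivalence of two runs -/

/-- A Kripke world for a pair of runs: the two store typings and the correspondence between
locations allocated in lockstep.  Allocations made under a secret pc stay outside `β`. -/
structure World (L : Type) where
  /-- store typing of the first run -/
  S1 : List (FGTy L)
  /-- store typing of the second run -/
  S2 : List (FGTy L)
  /-- corresponding locations -/
  β : ℕ → ℕ → Prop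

/-- World extension. -/
structure World.Le (W W' : World L) : Prop where
  p1 : W.S1 <+: W'.S1
  p2 : W.S2 <+: W'.S2
  pβ : ∀ n m, W.β n m → W'.β n m

theorem World.Le.refl (W : World L) : W.Le W :=
  ⟨List.prefix_rfl, List.prefix_rfl, fun _ _ => id⟩

theorem World.Le.trans {W W' W'' : World L} (h : W.Le W') (h' : W'.Le W'') : W.Le W'' :=
  ⟨h.p1.trans h'.p1, h.p2.trans h'.p2, fun n m x => h'.pβ n m (h.pβ n m x)⟩

/-- Any two well-typed values are indistinguishable at a type whose label is not below the
observer's level `a`. -/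
def Secret (a : L) (W : World L) (v v' : Exp) (τ : FGTy L) : Prop :=
  ¬ τ.lab ≤ a ∧ VTy W.S1 v τ ∧ VTy W.S2 v' τ

/-- Low equivalence of terms at observer level `a`. -/
def LowEq (a : L) (W : World L) : List (FGTy L) → L → Exp → Exp → FGTy L → Prop :=
  TRel (Secret a W) (fun n m τ => W.β n m ∧ W.S1[n]? = some τ ∧ W.S2[m]? = some τ)

/-- Low equivalence of closed values. -/
def VLow (a : L) (W : World L) (v v' : Exp) (τ : FGTy L) : Prop :=
  FGVal v ∧ FGVal v' ∧ LowEq a W [] ⊤ v v' τ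

/-- Low equivalence of heaps: both are well typed, `W.β` is a partial bijection between locations
of equal type, and corresponding locations hold low-equivalent values. -/
structure HLow (a : L) (W : World L) (h1 h2 : Heap) : Prop where
  ht1 : HTy W.S1 h1
  ht2 : HTy W.S2 h2
  inj1 : ∀ n m m', W.β n m → W.β n m' → m = m'
  inj2 : ∀ n n' m, W.β n m → W.β n' m → n = n'
  ty : ∀ n m, W.β n m → ∃ τ, W.S1[n]? = some τ ∧ W.S2[m]? = some τ
  rel : ∀ (n m : ℕ) (τ : FGTy L) (v1 v2 : Exp), W.β n m → W.S1[n]? = some τ →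
    h1[n]? = some v1 → h2[m]? = some v2 → VLow a W v1 v2 τ

theorem LowEq.mono {a : L} {W W' : World L} (hW : W.Le W') {Γ : List (FGTy L)} {pc : L}
    {e e' : Exp} {τ : FGTy L} (h : LowEq a W Γ pc e e' τ) : LowEq a W' Γ pc e e' τ :=
  TRel.mono (fun _ _ _ h => ⟨h.1, h.2.1.mono hW.p1, h.2.2.mono hW.p2⟩)
    (fun _ _ _ h => ⟨hW.pβ _ _ h.1, hW.p1.get_some h.2.1, hW.p2.get_some h.2.2⟩) h

theorem VLow.mono {a : L} {W W' : World L} (hW : W.Le W')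
    {v v' : Exp} {τ : FGTy L} (h : VLow a W v v' τ) : VLow a W' v v' τ :=
  ⟨h.1, h.2.1, h.2.2.mono hW⟩

theorem VLow.sub {a : L} {W : World L} {v v' : Exp} {τ τ' : FGTy L} (h : VLow a W v v' τ)
    (hs : FGSub τ τ') : VLow a W v v' τ' := ⟨h.1, h.2.1, TRel.sub h.2.2 hs le_rfl⟩

theorem Secret.vlow {a : L} {W : World L} {v v' : Exp} {τ : FGTy L} (h : Secret a W v v' τ) :
    VLow a W v v' τ := ⟨h.2.1.1, h.2.2.1, .high h⟩

theorem LowEq.left {a : L} {W : World L} {Γ : List (FGTy L)} {pc : L} {e e' : Exp} {τ : FGTy L}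
    (h : LowEq a W Γ pc e e' τ) : UTy W.S1 Γ pc e e τ :=
  TRel.left (fun _ _ _ h Γ _ => ((TRel.weaken h.2.1.2 Γ).lower_pc le_top))
    (fun _ _ _ h => ⟨rfl, h.2.1⟩) h

theorem LowEq.right {a : L} {W : World L} {Γ : List (FGTy L)} {pc : L} {e e' : Exp} {τ : FGTy L}
    (h : LowEq a W Γ pc e e' τ) : UTy W.S2 Γ pc e' e' τ :=
  TRel.left (fun _ _ _ h Γ _ => ((TRel.weaken h.2.2.2 Γ).lower_pc le_top))
    (fun _ _ _ h => ⟨rfl, h.2.2⟩) (TRel.symm h)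

theorem VLow.left {a : L} {W : World L} {v v' : Exp} {τ : FGTy L} (h : VLow a W v v' τ) :
    VTy W.S1 v τ := ⟨h.1, h.2.2.left⟩

theorem VLow.right {a : L} {W : World L} {v v' : Exp} {τ : FGTy L} (h : VLow a W v v' τ) :
    VTy W.S2 v' τ := ⟨h.2.1, h.2.2.right⟩

theorem LowEq.subst {a : L} {W : World L} {σ τ : FGTy L} {pc : L} {e e' v v' : Exp}
    (h : LowEq a W [σ] pc e e' τ) (hv : VLow a W v v' σ) :
    LowEq a W [] pc (e.subst v 0) (e'.subst v' 0) τ :=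
  TRel.subst_mid (fun _ _ _ h => ⟨h.2.1.closed, h.2.2.closed⟩) hv.2.2 h [] [] rfl

/-- A secret subtype can only be a subtype of a secret type. -/
theorem Secret.not_le {a : L} {W : World L} {v v' : Exp} {τ τ' : FGTy L}
    (h : Secret a W v v' τ) (hs : FGSub τ τ') : ¬ τ'.lab ≤ a :=
  fun h' => h.1 (hs.lab_le.trans h')

/-- Effects confined to secret locations preserve low equivalence of heaps. -/
theorem HLow.confined {a : L} {W : World L} {h1 h2 h1' h2' : Heap} (H : HLow a W h1 h2)
    {S1 S2 : List (FGTy L)} (p1 : W.S1 <+: S1) (p2 : W.S2 <+: S2)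
    (t1 : HTy S1 h1') (t2 : HTy S2 h2')
    (u1 : Unch a W.S1 h1 h1') (u2 : Unch a W.S2 h2 h2') :
    HLow a ⟨S1, S2, W.β⟩ h1' h2' := by
  refine ⟨t1, t2, H.inj1, H.inj2, fun n m hb => ?_, fun n m τ v1 v2 hb hn hv1 hv2 => ?_⟩
  · obtain ⟨τ, e1, e2⟩ := H.ty n m hb
    exact ⟨τ, p1.get_some e1, p2.get_some e2⟩
  · obtain ⟨σ, e1, e2⟩ := H.ty n m hb
    have e1' := p1.get_some e1
    have e2' := p2.get_some e2
    simp only at hn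
    rw [hn] at e1'
    cases e1'
    by_cases hl : τ.lab ≤ a
    · rw [u1 n τ e1 hl] at hv1
      rw [u2 m τ e2 hl] at hv2
      exact VLow.mono (W := W) (W' := ⟨S1, S2, W.β⟩) ⟨p1, p2, fun _ _ => id⟩
        (H.rel n m τ v1 v2 hb e1 hv1 hv2)
    · exact Secret.vlow ⟨hl, t1.2 n τ v1 hn hv1, t2.2 m τ v2 e2' hv2⟩

/-- Two arbitrary evaluations under a secret pc, with results of a secret type, need not be in
lockstep: by confinement they end in low-equivalent states. -/
theorem HLow.secret_runs {a : L} {W : World L} {h1 h2 h1' h2' : Heap} (H : HLow a W h1 h2)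
    {pc : L} {e1 e2 v1 v2 : Exp} {τ : FGTy L} (hpc : ¬ pc ≤ a) (hτ : ¬ τ.lab ≤ a)
    (t1 : UTy W.S1 [] pc e1 e1 τ) (t2 : UTy W.S2 [] pc e2 e2 τ)
    (E1 : FGEval h1 e1 h1' v1) (E2 : FGEval h2 e2 h2' v2) :
    ∃ W', W.Le W' ∧ HLow a W' h1' h2' ∧ VLow a W' v1 v2 τ := by
  obtain ⟨n, E1⟩ := E1.bounded
  obtain ⟨m, E2⟩ := E2.bounded
  obtain ⟨S1, p1, hh1, hv1, u1⟩ := preservation a _ _ _ _ _ _ _ _ _ t1 H.ht1 E1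
  obtain ⟨S2, p2, hh2, hv2, u2⟩ := preservation a _ _ _ _ _ _ _ _ _ t2 H.ht2 E2
  exact ⟨⟨S1, S2, W.β⟩, ⟨p1, p2, fun _ _ => id⟩,
    H.confined p1 p2 hh1 hh2 (u1 hpc) (u2 hpc), Secret.vlow ⟨hτ, hv1, hv2⟩⟩

theorem HLow.snoc {a : L} {W : World L} {h1 h2 : Heap} (H : HLow a W h1 h2)
    {v1 v2 : Exp} {τ : FGTy L} (hv : VLow a W v1 v2 τ) :
    ∃ W', W.Le W' ∧ HLow a W' (h1 ++ [v1]) (h2 ++ [v2]) ∧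
      VLow a W' (.loc h1.length) (.loc h2.length) (.ref τ ⊥) := by
  have l1 := H.ht1.1
  have l2 := H.ht2.1
  have lt : ∀ n m, W.β n m → n < h1.length ∧ m < h2.length := by
    intro n m hb
    obtain ⟨σ, e1, e2⟩ := H.ty n m hb
    rw [l1, l2]
    exact ⟨(List.getElem?_eq_some_iff.1 e1).1, (List.getElem?_eq_some_iff.1 e2).1⟩
  let W' : World L := ⟨W.S1 ++ [τ], W.S2 ++ [τ],
    fun n m => W.β n m ∨ (n = h1.length ∧ m = h2.length)⟩
  have hW : W.Le W' := ⟨⟨_, rfl⟩, ⟨_, rfl⟩, fun _ _ => .inl⟩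
  have g1 : W'.S1[h1.length]? = some τ := by simp [W', l1]
  have g2 : W'.S2[h2.length]? = some τ := by simp [W', l2]
  refine ⟨W', hW, ⟨H.ht1.snoc hv.left, H.ht2.snoc hv.right, ?_, ?_, ?_, ?_⟩,
    .loc, .loc, .loc ⟨.inr ⟨rfl, rfl⟩, g1, g2⟩⟩
  · rintro n m m' (hb | ⟨rfl, rfl⟩) (hb' | ⟨h, rfl⟩)
    · exact H.inj1 _ _ _ hb hb'
    · have := lt _ _ hb; omega
    · have := lt _ _ hb'; omega
    · rfl
  · rintro n n' m (hb | ⟨rfl, rfl⟩) (hb' | ⟨rfl, h⟩)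
    · exact H.inj2 _ _ _ hb hb'
    · have := lt _ _ hb; omega
    · have := lt _ _ hb'; omega
    · rfl
  · rintro n m (hb | ⟨rfl, rfl⟩)
    · obtain ⟨σ, e1, e2⟩ := H.ty n m hb
      exact ⟨σ, hW.p1.get_some e1, hW.p2.get_some e2⟩
    · exact ⟨τ, g1, g2⟩
  · rintro n m σ w1 w2 (hb | ⟨rfl, rfl⟩) hn hw1 hw2
    · obtain ⟨σ', e1, e2⟩ := H.ty n m hb
      have e1' := hW.p1.get_some e1
      rw [hn] at e1'
      cases e1'
      rw [List.getElem?_append_left (lt n m hb).1] at hw1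
      rw [List.getElem?_append_left (lt n m hb).2] at hw2
      exact (H.rel n m σ w1 w2 hb e1 hw1 hw2).mono hW
    · rw [g1] at hn
      simp at hw1 hw2
      cases hn; subst hw1 hw2
      exact hv.mono hW

theorem HLow.set {a : L} {W : World L} {h1 h2 : Heap} (H : HLow a W h1 h2) {n m : ℕ}
    {v1 v2 : Exp} {τ : FGTy L} (hb : W.β n m) (hn : W.S1[n]? = some τ) (hm : W.S2[m]? = some τ)
    (hv : VLow a W v1 v2 τ) : HLow a W (h1.set n v1) (h2.set m v2) := by
  refine ⟨H.ht1.set hn hv.left, H.ht2.set hm hv.right, H.inj1, H.inj2, H.ty, ?_⟩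
  intro n' m' σ w1 w2 hb' hn' hw1 hw2
  by_cases hnn : n = n'
  · subst hnn
    obtain rfl := H.inj1 _ _ _ hb hb'
    have b1 : n < h1.length := by rw [H.ht1.1]; exact (List.getElem?_eq_some_iff.1 hn).1
    have b2 : m < h2.length := by rw [H.ht2.1]; exact (List.getElem?_eq_some_iff.1 hm).1
    rw [List.getElem?_set_self b1] at hw1
    rw [List.getElem?_set_self b2] at hw2
    rw [hn] at hn'
    cases hn'; cases hw1; cases hw2
    exact hv
  · have hmm : m ≠ m' := by
      rintro rfl
      exact hnn (H.inj2 _ _ _ hb hb')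
    rw [List.getElem?_set_ne hnn] at hw1
    rw [List.getElem?_set_ne hmm] at hw2
    exact H.rel _ _ _ _ _ hb' hn' hw1 hw2

/-! ### The fundamental theorem -/

/-- Low-equivalent terms run from low-equivalent heaps end, if both terminate, in low-equivalent
values and heaps. -/
theorem fundamental (a : L) : ∀ (n : ℕ) (W : World L) (pc : L) (e e' : Exp) (τ : FGTy L)
    (h1 h2 h1' h2' : Heap) (v1 v2 : Exp), LowEq a W [] pc e e' τ → HLow a W h1 h2 →
    EvN n h1 e h1' v1 → FGEval h2 e' h2' v2 →
    ∃ W', W.Le W' ∧ HLow a W' h1' h2' ∧ VLow a W' v1 v2 τ := by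
  intro n
  induction n using Nat.strong_induction_on with
  | _ n ih =>
  intro W pc e e' τ h1 h2 h1' h2' v1 v2 hR
  generalize hΓ : ([] : List (FGTy L)) = Γ at hR
  unfold LowEq at hR
  induction hR generalizing h1 h2 h1' h2' v1 v2 with
  | var hn => subst hΓ; simp at hn
  | tt => intro hh E E'; cases E; cases E'; exact ⟨W, .refl W, hh, .tt, .tt, .tt⟩
  | ff => intro hh E E'; cases E; cases E'; exact ⟨W, .refl W, hh, .ff, .ff, .ff⟩
  | unit => intro hh E E'; cases E; cases E'; exact ⟨W, .refl W, hh, .unit, .unit, .unit⟩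
  | loc hl => intro hh E E'; cases E; cases E'; exact ⟨W, .refl W, hh, .loc, .loc, .loc hl⟩
  | high hs =>
    intro hh E E'
    obtain ⟨rfl, rfl⟩ := FGEval.of_val hs.2.1.1 E.toEval
    obtain ⟨rfl, rfl⟩ := FGEval.of_val hs.2.2.1 E'
    exact ⟨W, .refl W, hh, hs.vlow⟩
  | lam hb =>
    intro hh E E'; subst hΓ; cases E; cases E'
    exact ⟨W, .refl W, hh, .lam, .lam, .lam hb⟩
  | @app _ _ _ _ _ _ τ1 le τ2 l r1 r2 hle hl =>
    intro hh E E'; subst hΓ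
    cases E with
    | app E1 E2 E3 =>
    cases E' with
    | app E1' E2' E3' =>
      obtain ⟨W1, p1, hh1, w1⟩ := ih _ (Nat.lt_succ_self _) _ _ _ _ _ _ _ _ _ _ _ r1 hh E1 E1'
      obtain ⟨W2, p2, hh2, w2⟩ :=
        ih _ (Nat.lt_succ_self _) _ _ _ _ _ _ _ _ _ _ _ (LowEq.mono p1 r2) hh1 E2 E2'
      rcases TRel.inv_fn w1.2.2 w1.1 rfl with
        ⟨σ, hs, hsub⟩ | ⟨b, b', τ1', le', τ2', q, q', hb, s1, s2, s3⟩
      · -- the two functions may be unrelated, but they run under a secret pc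
        have hl' : ¬ l ≤ a := hs.not_le hsub
        obtain ⟨W3, p3, hh3, w3⟩ := hh2.secret_runs
          (fun h => hl' ((le_sup_left.trans hle).trans h)) (fun h => hl' (hl.trans h))
          (w1.left.lam_inv p2.p1 w2.left) (w1.right.lam_inv p2.p2 w2.right) E3.toEval E3'
        exact ⟨W3, p1.trans (p2.trans p3), hh3, w3⟩
      · cases q; cases q'
        obtain ⟨W3, p3, hh3, w3⟩ := ih _ (Nat.lt_succ_self _) _ _ _ _ _ _ _ _ _ _ _
          (LowEq.subst (LowEq.mono p2 hb) (w2.sub s1)) hh2 E3 E3'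
        exact ⟨W3, p1.trans (p2.trans p3), hh3, w3.sub s3⟩
  | pair r1 r2 =>
    intro hh E E'; subst hΓ
    cases E with
    | pair E1 E2 =>
    cases E' with
    | pair E1' E2' =>
      obtain ⟨W1, p1, hh1, w1⟩ := ih _ (Nat.lt_succ_self _) _ _ _ _ _ _ _ _ _ _ _ r1 hh E1 E1'
      obtain ⟨W2, p2, hh2, w2⟩ :=
        ih _ (Nat.lt_succ_self _) _ _ _ _ _ _ _ _ _ _ _ (LowEq.mono p1 r2) hh1 E2 E2'
      exact ⟨W2, p1.trans p2, hh2, .pair w1.1 w2.1, .pair w1.2.1 w2.2.1,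
        .pair (w1.mono p2).2.2 w2.2.2⟩
  | @fst _ _ _ _ τ1 τ2 l r1 hl =>
    intro hh E E'; subst hΓ
    cases E with
    | fst E1 =>
    cases E' with
    | fst E1' =>
      obtain ⟨W1, p1, hh1, w1⟩ := ih _ (Nat.lt_succ_self _) _ _ _ _ _ _ _ _ _ _ _ r1 hh E1 E1'
      refine ⟨W1, p1, hh1, ?_⟩
      rcases TRel.inv_prod w1.2.2 w1.1 rfl with ⟨σ, hs, hsub⟩ | ⟨u1, u2, u1', u2', q, q', x, y⟩
      · have hl' : ¬ l ≤ a := hs.not_le hsub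
        exact Secret.vlow ⟨fun h => hl' (hl.trans h), w1.left.prod_inv.1, w1.right.prod_inv.1⟩
      · cases q; cases q'
        exact ⟨w1.left.prod_inv.1.1, w1.right.prod_inv.1.1, x⟩
  | @snd _ _ _ _ τ1 τ2 l r1 hl =>
    intro hh E E'; subst hΓ
    cases E with
    | snd E1 =>
    cases E' with
    | snd E1' =>
      obtain ⟨W1, p1, hh1, w1⟩ := ih _ (Nat.lt_succ_self _) _ _ _ _ _ _ _ _ _ _ _ r1 hh E1 E1'
      refine ⟨W1, p1, hh1, ?_⟩
      rcases TRel.inv_prod w1.2.2 w1.1 rfl with ⟨σ, hs, hsub⟩ | ⟨u1, u2, u1', u2', q, q', x, y⟩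
      · have hl' : ¬ l ≤ a := hs.not_le hsub
        exact Secret.vlow ⟨fun h => hl' (hl.trans h), w1.left.prod_inv.2, w1.right.prod_inv.2⟩
      · cases q; cases q'
        exact ⟨w1.left.prod_inv.2.1, w1.right.prod_inv.2.1, y⟩
  | inl r1 =>
    intro hh E E'; subst hΓ
    cases E with
    | inl E1 =>
    cases E' with
    | inl E1' =>
      obtain ⟨W1, p1, hh1, w1⟩ := ih _ (Nat.lt_succ_self _) _ _ _ _ _ _ _ _ _ _ _ r1 hh E1 E1'
      exact ⟨W1, p1, hh1, .inl w1.1, .inl w1.2.1, .inl w1.2.2⟩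
  | inr r1 =>
    intro hh E E'; subst hΓ
    cases E with
    | inr E1 =>
    cases E' with
    | inr E1' =>
      obtain ⟨W1, p1, hh1, w1⟩ := ih _ (Nat.lt_succ_self _) _ _ _ _ _ _ _ _ _ _ _ r1 hh E1 E1'
      exact ⟨W1, p1, hh1, .inr w1.1, .inr w1.2.1, .inr w1.2.2⟩
  | @case _ pc _ _ e1 e1' e2 e2' τ1 τ2 l τ r0 r1 r2 hl =>
    intro hh E E'; subst hΓ
    -- When the scrutinee is secret, each run may take either branch, but under a secret pc.
    have hsec : ∀ {W1 : World L}, W.Le W1 → ∀ {k1 k2 s s' c c'}, HLow a W1 k1 k2 →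
        (∃ σ, Secret a W1 s s' σ ∧ FGSub σ (.sum τ1 τ2 l)) →
        UTy W1.S1 [] (pc ⊔ l) c c τ → UTy W1.S2 [] (pc ⊔ l) c' c' τ →
        FGEval k1 c h1' v1 → FGEval k2 c' h2' v2 →
        ∃ W', W.Le W' ∧ HLow a W' h1' h2' ∧ VLow a W' v1 v2 τ := by
      rintro W1 p1 k1 k2 s s' c c' hk ⟨σ, hs, hsub⟩ t t' F F'
      have hl' : ¬ l ≤ a := hs.not_le hsub
      obtain ⟨W2, p2, hh2, w2⟩ := hk.secret_runs (fun h => hl' (le_sup_right.trans h))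
        (fun h => hl' (hl.trans h)) t t' F F'
      exact ⟨W2, p1.trans p2, hh2, w2⟩
    cases E with
    | caseL E1 E2 =>
      cases E' with
      | caseL E1' E2' =>
        obtain ⟨W1, p1, hh1, w1⟩ := ih _ (Nat.lt_succ_self _) _ _ _ _ _ _ _ _ _ _ _ r0 hh E1 E1'
        rcases TRel.inv_sum w1.2.2 w1.1 rfl with hs | ⟨u, u', q, q', x⟩ | ⟨u, u', q, q', x⟩
        · exact hsec p1 hh1 hs
            (UTy.subst (UTy.mono p1.p1 (LowEq.left r1)) w1.left.inl_inv)
            (UTy.subst (UTy.mono p1.p2 (LowEq.right r1)) w1.right.inl_inv) E2.toEval E2'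
        · cases q; cases q'
          obtain ⟨W2, p2, hh2, w2⟩ := ih _ (Nat.lt_succ_self _) _ _ _ _ _ _ _ _ _ _ _
            (LowEq.subst (LowEq.mono p1 r1) ⟨w1.left.inl_inv.1, w1.right.inl_inv.1, x⟩) hh1 E2 E2'
          exact ⟨W2, p1.trans p2, hh2, w2⟩
        · cases q
      | caseR E1' E2' =>
        obtain ⟨W1, p1, hh1, w1⟩ := ih _ (Nat.lt_succ_self _) _ _ _ _ _ _ _ _ _ _ _ r0 hh E1 E1'
        rcases TRel.inv_sum w1.2.2 w1.1 rfl with hs | ⟨u, u', q, q', x⟩ | ⟨u, u', q, q', x⟩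
        · exact hsec p1 hh1 hs
            (UTy.subst (UTy.mono p1.p1 (LowEq.left r1)) w1.left.inl_inv)
            (UTy.subst (UTy.mono p1.p2 (LowEq.right r2)) w1.right.inr_inv) E2.toEval E2'
        · cases q'
        · cases q
    | caseR E1 E2 =>
      cases E' with
      | caseL E1' E2' =>
        obtain ⟨W1, p1, hh1, w1⟩ := ih _ (Nat.lt_succ_self _) _ _ _ _ _ _ _ _ _ _ _ r0 hh E1 E1'
        rcases TRel.inv_sum w1.2.2 w1.1 rfl with hs | ⟨u, u', q, q', x⟩ | ⟨u, u', q, q', x⟩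
        · exact hsec p1 hh1 hs
            (UTy.subst (UTy.mono p1.p1 (LowEq.left r2)) w1.left.inr_inv)
            (UTy.subst (UTy.mono p1.p2 (LowEq.right r1)) w1.right.inl_inv) E2.toEval E2'
        · cases q
        · cases q'
      | caseR E1' E2' =>
        obtain ⟨W1, p1, hh1, w1⟩ := ih _ (Nat.lt_succ_self _) _ _ _ _ _ _ _ _ _ _ _ r0 hh E1 E1'
        rcases TRel.inv_sum w1.2.2 w1.1 rfl with hs | ⟨u, u', q, q', x⟩ | ⟨u, u', q, q', x⟩
        · exact hsec p1 hh1 hs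
            (UTy.subst (UTy.mono p1.p1 (LowEq.left r2)) w1.left.inr_inv)
            (UTy.subst (UTy.mono p1.p2 (LowEq.right r2)) w1.right.inr_inv) E2.toEval E2'
        · cases q
        · cases q; cases q'
          obtain ⟨W2, p2, hh2, w2⟩ := ih _ (Nat.lt_succ_self _) _ _ _ _ _ _ _ _ _ _ _
            (LowEq.subst (LowEq.mono p1 r2) ⟨w1.left.inr_inv.1, w1.right.inr_inv.1, x⟩) hh1 E2 E2'
          exact ⟨W2, p1.trans p2, hh2, w2⟩
  | new r1 _ =>
    intro hh E E'; subst hΓ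
    cases E with
    | new E1 =>
    cases E' with
    | new E1' =>
      obtain ⟨W1, p1, hh1, w1⟩ := ih _ (Nat.lt_succ_self _) _ _ _ _ _ _ _ _ _ _ _ r1 hh E1 E1'
      obtain ⟨W2, p2, hh2, w2⟩ := hh1.snoc w1
      exact ⟨W2, p1.trans p2, hh2, w2⟩
  | @deref _ _ _ _ τ τ' l r1 hsb hl =>
    intro hh E E'; subst hΓ
    cases E with
    | deref E1 hk =>
    cases E' with
    | deref E1' hk' =>
      obtain ⟨W1, p1, hh1, w1⟩ := ih _ (Nat.lt_succ_self _) _ _ _ _ _ _ _ _ _ _ _ r1 hh E1 E1'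
      refine ⟨W1, p1, hh1, ?_⟩
      rcases TRel.inv_ref w1.2.2 w1.1 rfl with ⟨σ, hs, hsub⟩ | ⟨k, k', q, q', hb, hn, hm⟩
      · have hl' : ¬ l ≤ a := hs.not_le hsub
        exact Secret.vlow ⟨fun h => hl' (hl.trans h),
          (hh1.ht1.2 _ _ _ w1.left.loc_inv hk).sub hsb,
          (hh1.ht2.2 _ _ _ w1.right.loc_inv hk').sub hsb⟩
      · cases q; cases q'
        exact (hh1.rel _ _ _ _ _ hb hn hk hk').sub hsb
  | @assign _ _ _ _ _ _ τ l r1 r2 hl =>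
    intro hh E E'; subst hΓ
    cases E with
    | assign E1 E2 =>
    cases E' with
    | assign E1' E2' =>
      obtain ⟨W1, p1, hh1, w1⟩ := ih _ (Nat.lt_succ_self _) _ _ _ _ _ _ _ _ _ _ _ r1 hh E1 E1'
      obtain ⟨W2, p2, hh2, w2⟩ :=
        ih _ (Nat.lt_succ_self _) _ _ _ _ _ _ _ _ _ _ _ (LowEq.mono p1 r2) hh1 E2 E2'
      replace w1 := w1.mono p2
      rcases TRel.inv_ref w1.2.2 w1.1 rfl with ⟨σ, hs, hsub⟩ | ⟨k, k', q, q', hb, hn, hm⟩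
      · -- different locations may be written, but their contents are secret
        have hl' : ¬ l ≤ a := hs.not_le hsub
        have hτ : ¬ τ.lab ≤ a := fun h => hl' ((le_sup_right.trans hl).trans h)
        refine ⟨W2, p1.trans p2, ?_, .unit, .unit, .unit⟩
        exact hh2.confined List.prefix_rfl List.prefix_rfl
          (hh2.ht1.set w1.left.loc_inv w2.left) (hh2.ht2.set w1.right.loc_inv w2.right)
          (.set w1.left.loc_inv hτ _) (.set w1.right.loc_inv hτ _)
      · cases q; cases q'
        exact ⟨W2, p1.trans p2, hh2.set hb hn hm w2, .unit, .unit, .unit⟩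
  | sub _ hs _ ih' =>
    intro hh E E'
    obtain ⟨W1, p1, hh1, w1⟩ := ih' _ _ _ _ _ _ hΓ hh E E'
    exact ⟨W1, p1, hh1, w1.sub hs⟩

/-- Low-equivalent values of ground observable type `(bool + unit)^l` are equal. -/
theorem VLow.eq_of_ground {a : L} {W : World L} {v v' : Exp}
    (h : VLow a W v v' (.sum (.bool ⊥) (.unit ⊥) a)) : v = v' := by
  rcases TRel.inv_sum h.2.2 h.1 rfl with ⟨σ, hs, hsub⟩ | ⟨u, u', q, q', x⟩ | ⟨u, u', q, q', x⟩
  · exact (hs.not_le hsub le_rfl).elim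
  · cases q; cases q'
    rcases TRel.inv_bool x h.left.inl_inv.1 rfl with ⟨σ, hs, hsub⟩ | rfl
    · exact (hs.not_le hsub bot_le).elim
    · rfl
  · cases q; cases q'
    rcases TRel.inv_unit x h.left.inr_inv.1 rfl with ⟨σ, hs, hsub⟩ | rfl
    · exact (hs.not_le hsub bot_le).elim
    · rfl

end Semantics

/-! ## STATEMENT 6: Well-typed CG programs translate to noninterfering FG programs -/

theorem cg2fg_target_noninterference
    {L : Type} [Lattice L] [BoundedOrder L]
    (li l l1 : L) (τ : CGTy L) (es et v1 v2 : Exp)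
    (hflow : ¬ li ≤ l)
    (hty : CGTyped [CGTy.labeled li τ] es (CGTy.monad l1 l CGTy.bool))
    (htr : CG2FG [CGTy.labeled li τ] es (CGTy.monad l1 l CGTy.bool) et)
    (hv1 : FGVal v1) (hv1ty : FGTyped ([] : List (FGTy L)) ⊤ v1 (toFG (CGTy.labeled li τ)))
    (hv2 : FGVal v2) (hv2ty : FGTyped ([] : List (FGTy L)) ⊤ v2 (toFG (CGTy.labeled li τ)))
    (h1 h2 : Heap) (r1 r2 : Exp)
    (hrun1 : FGEval [] (Exp.app (et.subst v1 0) Exp.unit) h1 r1)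
    (hrun2 : FGEval [] (Exp.app (et.subst v2 0) Exp.unit) h2 r2) :
    r1 = r2 := by
  let W : World L := ⟨[], [], fun _ _ => False⟩
  have hh : HLow l W [] [] :=
    ⟨⟨rfl, by simp [W]⟩, ⟨rfl, by simp [W]⟩, fun _ _ _ h => h.elim, fun _ _ _ h => h.elim,
      fun _ _ h => h.elim, fun _ _ _ _ _ h => h.elim⟩
  have hv : VLow l W v1 v2 (toFG (.labeled li τ)) :=
    Secret.vlow ⟨hflow, ⟨hv1, hv1ty.trel⟩, ⟨hv2, hv2ty.trel⟩⟩
  have he : LowEq l W [] ⊤ (et.subst v1 0) (et.subst v2 0) (toFG (.monad l1 l .bool)) :=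
    LowEq.subst (FGTyped.trel htr.typed) hv
  have happ : LowEq l W [] ⊥ (.app (et.subst v1 0) .unit) (.app (et.subst v2 0) .unit)
      (.sum (.bool ⊥) (.unit ⊥) l) :=
    .app (TRel.lower_pc he bot_le) .unit (by simp) bot_le
  obtain ⟨n, hn⟩ := hrun1.bounded
  obtain ⟨W', _, _, hr⟩ := fundamental l n W ⊥ _ _ _ _ _ _ _ _ _ happ hh hn hrun2
  exact hr.eq_of_ground
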